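/- arXiv:1912.06372 — 2 statements merged into one kernel-verified Lean document; each statement's English description precedes it below -/
import Mathlib

section
/- The incidence structure T(E) constructed from an egg E = E_{n,m} of H∞ = PG(2n+m−1,q) embedded in Π = PG(2n+m,q) is a generalised quadrangle of order (s,t) = (q^n, q^m). -/
/-!
The points and lines off `H` are handled through one observation: a subspace `U` with
`U ⊓ H = S` and `dim U = dim S + 1` is `S ⊔ ⟨x⟩` for each of its vectors `x ∉ H`
(`EggGQ.eq_sup_span`). Counting such `U` between `S` and a fixed subspace (`EggGQ.card_ext`) gives
all the nontrivial incidence numbers. The tangent condition forces an egg element inside `TS e` to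
be `e`, so every line on a tangent point `W` with `W ⊓ H = TS e` has `e` as its egg element.
Together with the dimension formula for a tangent point and a line with different egg elements
(`EggGQ.IsEgg.exists_mem_tangent_line`), this settles all cases of the quadrangle axiom except that of an affine point `x` and an affine line `U`
with `x ∉ U`.

In that case put `e = U ⊓ H` and subtract from `x` a vector of `U` to get `z ∈ H`. If `z ∈ TS e`,
then `x` and `U` are on a common tangent point. Otherwise one needs a unique egg element `f ≠ e`
with `z ∈ f + e`. The sets `(f + e) \ e` are pairwise disjoint because three egg elements span
`3n` dimensions, they avoid `TS e`, and there are `q ^ m` of them with `(q ^ n - 1) q ^ n` vectors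
each. That is exactly the number of vectors of `H \ TS e`, so they partition it
(`EggGQ.IsEgg.exists_cover`, `EggGQ.IsEgg.eq_of_sub_mem`).
-/

open Module

namespace EggGQ

variable {K V : Type*} [Field K] [AddCommGroup V] [Module K V]

/-! ### Subspaces meeting a hyperplane in a prescribed subspace -/

/-- `H` has the property characteristic of a hyperplane: every vector off `H` spans a
complement of `H`. -/
def IsHyper (H : Submodule K V) : Prop :=
  ∀ x ∉ H, ∀ u, ∃ c : K, u - c • x ∈ H

theorem isHyper_of_finrank [FiniteDimensional K V] {H : Submodule K V}
    (hH : finrank K V = finrank K H + 1) : IsHyper H := by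
  intro x hx u
  have htop : H ⊔ K ∙ x = ⊤ := by
    apply Submodule.eq_top_of_finrank_eq
    rw [Submodule.finrank_sup_span_singleton hx, hH]
  have hu : u ∈ H ⊔ K ∙ x := htop ▸ Submodule.mem_top
  obtain ⟨y, hy, z, hz, rfl⟩ := Submodule.mem_sup.1 hu
  obtain ⟨c, rfl⟩ := Submodule.mem_span_singleton.1 hz
  exact ⟨c, by simpa using hy⟩

/-- For `u, x` off `H`, the vector `u` can be rescaled so that it is congruent to `x`
modulo `H`. -/
theorem IsHyper.normalise {H : Submodule K V} (hyp : IsHyper H) {x u : V} (hx : x ∉ H)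
    (hu : u ∉ H) : ∃ c : K, x - c • u ∈ H ∧ c • u ∉ H := by
  obtain ⟨c, hc⟩ := hyp u hu x
  exact ⟨c, hc, fun h => hx (by simpa using H.add_mem hc h)⟩

theorem sup_span_inf {H S : Submodule K V} (hS : S ≤ H) {x : V} (hx : x ∉ H) :
    (S ⊔ K ∙ x) ⊓ H = S := by
  apply le_antisymm
  · rintro y ⟨hy, hyH⟩
    obtain ⟨s, hs, z, hz, rfl⟩ := Submodule.mem_sup.1 hy
    obtain ⟨c, rfl⟩ := Submodule.mem_span_singleton.1 hz
    have h1 : c • x ∈ H := (H.add_mem_iff_right (hS hs)).1 hyH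
    rcases eq_or_ne c 0 with rfl | hc
    · simpa using hs
    · exact absurd ((H.smul_mem_iff hc).1 h1) hx
  · exact le_inf le_sup_left hS

theorem exists_mem_not_mem [FiniteDimensional K V] {H U S : Submodule K V}
    (hUH : U ⊓ H = S) (hU : finrank K U = finrank K S + 1) : ∃ x ∈ U, x ∉ H := by
  by_contra! h
  have h1 : U ⊓ H = U := inf_eq_left.2 h
  rw [← hUH, h1] at hU
  omega

theorem eq_sup_span [FiniteDimensional K V] {H U S : Submodule K V}
    (hUH : U ⊓ H = S) (hU : finrank K U = finrank K S + 1) {x : V} (hxU : x ∈ U) (hx : x ∉ H) :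
    U = S ⊔ K ∙ x := by
  symm
  apply Submodule.eq_of_le_of_finrank_eq
  · refine sup_le (hUH ▸ inf_le_left) ?_
    simpa using hxU
  · rw [Submodule.finrank_sup_span_singleton (fun h => hx ((hUH ▸ inf_le_right : S ≤ H) h)), hU]

/-- Extensions of `S` by one dimension off `H`, inside a subspace `W` that meets `H` in `T`:
picking in each extension `U` a vector congruent modulo `H` to a fixed `x₀ ∈ W \ H` identifies
the pairs (an extension `U`, a vector of `S`) with the vectors of `T`. -/
theorem card_ext_mul [FiniteDimensional K V] {H : Submodule K V} (hyp : IsHyper H)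
    {S T W : Submodule K V} (hST : S ≤ T) (hW : W ⊓ H = T) {x₀ : V} (hxW : x₀ ∈ W)
    (hx₀ : x₀ ∉ H) :
    Nat.card {U : Submodule K V // (finrank K U = finrank K S + 1 ∧ U ⊓ H = S) ∧ U ≤ W} *
      Nat.card S = Nat.card T := by
  have hTW : T ≤ W := hW ▸ inf_le_left
  have hTH : T ≤ H := hW ▸ inf_le_right
  have key : ∀ U : {U : Submodule K V //
      (finrank K U = finrank K S + 1 ∧ U ⊓ H = S) ∧ U ≤ W}, ∃ u ∈ U.1, u - x₀ ∈ T ∧ u ∉ H := by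
    rintro ⟨U, ⟨hU, hUH⟩, hUW⟩
    obtain ⟨u, hu, huH⟩ := exists_mem_not_mem hUH hU
    obtain ⟨c, hc, hcu⟩ := hyp.normalise hx₀ huH
    refine ⟨c • u, U.smul_mem c hu, ?_, hcu⟩
    rw [← hW]
    refine ⟨W.sub_mem (W.smul_mem c (hUW hu)) hxW, ?_⟩
    rw [← neg_sub]
    exact H.neg_mem hc
  choose g hgU hgT hgH using key
  rw [← Nat.card_prod]
  refine Nat.card_eq_of_bijective
    (fun p => (⟨(g p.1 - x₀) + p.2, T.add_mem (hgT p.1) (hST p.2.2)⟩ : T)) ⟨?_, ?_⟩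
  · rintro ⟨U, s⟩ ⟨U', s'⟩ h
    have h1 : g U + s = g U' + s' := by
      have := congrArg Subtype.val h
      simp only at this
      rw [← sub_add_cancel (g U + (s : V)) x₀, ← sub_add_eq_add_sub, this]
      abel
    have hSU : S ≤ U.1 := U.2.1.2.ge.trans inf_le_left
    have hSU' : S ≤ U'.1 := U'.2.1.2.ge.trans inf_le_left
    have hSH : S ≤ H := hST.trans hTH
    have hnot : g U + (s : V) ∉ H := fun h => hgH U ((H.add_mem_iff_left (hSH s.2)).1 h)
    have hUU' : U = U' := by
      apply Subtype.ext
      rw [eq_sup_span U.2.1.2 U.2.1.1 (U.1.add_mem (hgU U) (hSU s.2)) hnot, h1]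
      rw [h1] at hnot
      exact (eq_sup_span U'.2.1.2 U'.2.1.1 (U'.1.add_mem (hgU U') (hSU' s'.2)) hnot).symm
    subst hUU'
    have : (s : V) = s' := add_left_cancel h1
    rw [Subtype.ext this]
  · rintro ⟨t, ht⟩
    have hSH : S ≤ H := hST.trans hTH
    have hx : x₀ + t ∉ H := fun h => hx₀ ((H.add_mem_iff_left (hTH ht)).1 h)
    let U : {U : Submodule K V // (finrank K U = finrank K S + 1 ∧ U ⊓ H = S) ∧ U ≤ W} :=
      ⟨S ⊔ K ∙ (x₀ + t), ⟨Submodule.finrank_sup_span_singleton (fun h => hx (hSH h)), sup_span_inf hSH hx⟩,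
        sup_le (hST.trans hTW) (by simpa using W.add_mem hxW (hTW ht))⟩
    have hmem : x₀ + t - g U ∈ S := by
      rw [← U.2.1.2]
      refine ⟨U.1.sub_mem ?_ (hgU U), ?_⟩
      · exact (le_sup_right : K ∙ (x₀ + t) ≤ S ⊔ K ∙ (x₀ + t)) (Submodule.mem_span_singleton_self _)
      · have h1 : x₀ + t - g U = t - (g U - x₀) := by abel
        rw [h1]
        exact H.sub_mem (hTH ht) (hTH (hgT U))
    exact ⟨(U, ⟨_, hmem⟩), Subtype.ext (by simp)⟩

theorem card_ext [Finite K] [FiniteDimensional K V] {H : Submodule K V} (hyp : IsHyper H)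
    {S T W : Submodule K V} (hST : S ≤ T) (hW : W ⊓ H = T) {x₀ : V} (hxW : x₀ ∈ W)
    (hx₀ : x₀ ∉ H) {a : ℕ} (ha : finrank K T = finrank K S + a) :
    Nat.card {U : Submodule K V // (finrank K U = finrank K S + 1 ∧ U ⊓ H = S) ∧ U ≤ W} =
      Nat.card K ^ a := by
  have h := card_ext_mul hyp hST hW hxW hx₀
  rw [natCard_eq_pow_finrank (K := K) (V := S), natCard_eq_pow_finrank (K := K) (V := T), ha,
    pow_add, mul_comm] at h
  exact Nat.eq_of_mul_eq_mul_left (pow_pos Nat.card_pos _) h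

/-! ### Eggs -/

/-- An egg `E_{n,m}` with tangent spaces `TS E` in a hyperplane `H` of a vector space of
dimension `2n + m + 1` over a finite field. -/
structure IsEgg (n m : ℕ) (H : Submodule K V) (Egg : Set (Submodule K V))
    (TS : Submodule K V → Submodule K V) : Prop where
  hn : 1 ≤ n
  dimV : finrank K V = 2 * n + m + 1
  dimH : finrank K H = 2 * n + m
  card : Nat.card Egg = Nat.card K ^ m + 1
  le_H : ∀ E ∈ Egg, E ≤ H
  dim : ∀ E ∈ Egg, finrank K E = n
  span3 : ∀ E ∈ Egg, ∀ F ∈ Egg, ∀ G ∈ Egg, E ≠ F → E ≠ G → F ≠ G →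
      finrank K ↥(E ⊔ F ⊔ G) = 3 * n
  le_TS : ∀ E ∈ Egg, E ≤ TS E
  TS_le : ∀ E ∈ Egg, TS E ≤ H
  dimTS : ∀ E ∈ Egg, finrank K (TS E) = n + m
  disj : ∀ E ∈ Egg, ∀ F ∈ Egg, F ≠ E → F ⊓ TS E = ⊥

namespace IsEgg

variable {n m : ℕ} {H : Submodule K V}
  {Egg : Set (Submodule K V)} {TS : Submodule K V → Submodule K V}

theorem hyp [FiniteDimensional K V] (h : IsEgg n m H Egg TS) : IsHyper H :=
  isHyper_of_finrank (by rw [h.dimV, h.dimH])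

theorem eq_of_mem_TS (h : IsEgg n m H Egg TS) {e f : Submodule K V} (he : e ∈ Egg)
    (hf : f ∈ Egg) {v : V} (hv : v ≠ 0) (hvf : v ∈ f) (hve : v ∈ TS e) : f = e := by
  by_contra hne
  have : v ∈ f ⊓ TS e := ⟨hvf, hve⟩
  rw [h.disj e he f hf hne] at this
  exact hv (by simpa using this)

theorem eq_of_le_TS (h : IsEgg n m H Egg TS) {e f : Submodule K V} (he : e ∈ Egg)
    (hf : f ∈ Egg) (hfe : f ≤ TS e) : f = e := by
  have hne : f ≠ ⊥ := by
    rintro rfl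
    have h1 := h.dim _ hf
    have h2 := h.hn
    rw [finrank_bot] at h1
    omega
  obtain ⟨v, hv, hv0⟩ := Submodule.exists_mem_ne_zero_of_ne_bot hne
  exact h.eq_of_mem_TS he hf hv0 hv (hfe hv)

/-- Modulo an egg element `e`, the other egg elements meet pairwise trivially. -/
theorem eq_of_sub_mem [FiniteDimensional K V] (h : IsEgg n m H Egg TS) {e f g : Submodule K V} (he : e ∈ Egg)
    (hf : f ∈ Egg) (hg : g ∈ Egg) (hfe : f ≠ e) (hge : g ≠ e) {v w : V} (hv : v ≠ 0)
    (hvf : v ∈ f) (hwg : w ∈ g) (hvw : v - w ∈ e) : f = g := by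
  by_contra hfg
  have h3 := h.span3 f hf e he g hg hfe hfg (Ne.symm hge)
  rw [sup_assoc] at h3
  have h4 := Submodule.finrank_sup_add_finrank_inf_eq f (e ⊔ g)
  have h5 := Submodule.finrank_add_le_finrank_add_finrank e g
  rw [h.dim e he, h.dim g hg] at h5
  rw [h3, h.dim f hf] at h4
  have h6 : finrank K ↥(f ⊓ (e ⊔ g)) = 0 := by omega
  rw [Submodule.finrank_eq_zero] at h6
  have h7 : v ∈ f ⊓ (e ⊔ g) := ⟨hvf, by
    rw [← sub_add_cancel v w]
    exact Submodule.add_mem_sup hvw hwg⟩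
  rw [h6] at h7
  exact hv (by simpa using h7)

/-- The sets `f + e`, for `f` an egg element other than `e`, cover `H` outside the tangent space
at `e`. They meet pairwise in `e`, and both sides have `q ^ (2n+m) - q ^ (n+m)` vectors. -/
theorem exists_cover [Finite K] [FiniteDimensional K V] (h : IsEgg n m H Egg TS) {e : Submodule K V} (he : e ∈ Egg) {z : V}
    (hz : z ∈ H) (hzT : z ∉ TS e) : ∃ f ∈ Egg, f ≠ e ∧ ∃ v ∈ f, z - v ∈ e := by
  have : Finite V := Module.finite_of_finite K
  let A := (Σ f : {f : Submodule K V // f ∈ Egg ∧ f ≠ e}, {v : V // v ∈ f.1 ∧ v ≠ 0}) × e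
  let B := {z : V // z ∈ H ∧ z ∉ TS e}
  let φ : A → B := fun p => ⟨p.1.2.1 + p.2, H.add_mem (h.le_H _ p.1.1.2.1 p.1.2.2.1)
    (h.le_H e he p.2.2), fun hmem => p.1.1.2.2 (h.eq_of_mem_TS he p.1.1.2.1 p.1.2.2.2 p.1.2.2.1
      (((TS e).add_mem_iff_left (h.le_TS e he p.2.2)).1 hmem))⟩
  have hinj : Function.Injective φ := by
    rintro ⟨⟨⟨f, hf, hfe⟩, ⟨v, hvf, hv⟩⟩, ⟨w, hw⟩⟩ ⟨⟨⟨f', hf', hfe'⟩, ⟨v', hvf', hv'⟩⟩, ⟨w', hw'⟩⟩ heq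
    have h1 : v + w = v' + w' := congrArg Subtype.val heq
    have h2 : v - v' ∈ e := by
      have h3 : v - v' = w' - w := by
        rw [sub_eq_sub_iff_add_eq_add, h1, add_comm]
      rw [h3]
      exact e.sub_mem hw' hw
    obtain rfl := h.eq_of_sub_mem he hf hf' hfe hfe' hv hvf hvf' h2
    have h4 : v = v' := by
      by_contra hne
      exact hfe (h.eq_of_mem_TS he hf (sub_ne_zero.2 hne) (f.sub_mem hvf hvf') (h.le_TS e he h2))
    subst h4
    obtain rfl := add_left_cancel h1
    rfl
  have hcardE : Nat.card {f : Submodule K V // f ∈ Egg ∧ f ≠ e} = Nat.card K ^ m := by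
    have h1 : Nat.card {f : Submodule K V // f ∈ Egg ∧ f ≠ e} = (Egg \ {e}).ncard := rfl
    have h2 := Set.ncard_sdiff_singleton_add_one he (Set.toFinite Egg)
    have h3 := h.card
    rw [Nat.card_coe_set_eq] at h3
    omega
  have hcardv : ∀ f : {f : Submodule K V // f ∈ Egg ∧ f ≠ e},
      Nat.card {v : V // v ∈ f.1 ∧ v ≠ 0} = Nat.card K ^ n - 1 := by
    rintro ⟨f, hf, -⟩
    have h1 : Nat.card {v : V // v ∈ f ∧ v ≠ 0} = ((f : Set V) \ {0}).ncard := rfl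
    have h2 := Set.ncard_sdiff_singleton_add_one (s := (f : Set V)) f.zero_mem (Set.toFinite _)
    have h3 : (f : Set V).ncard = Nat.card K ^ n := by
      rw [← h.dim f hf]
      exact natCard_eq_pow_finrank (K := K) (V := f)
    simp only at h1 ⊢
    omega
  have hA : Nat.card A = Nat.card K ^ m * (Nat.card K ^ n - 1) * Nat.card K ^ n := by
    have := Fintype.ofFinite {f : Submodule K V // f ∈ Egg ∧ f ≠ e}
    rw [Nat.card_prod, Nat.card_sigma, Finset.sum_congr rfl (fun f _ => hcardv f),
      Finset.sum_const, Finset.card_univ, ← Nat.card_eq_fintype_card, hcardE, smul_eq_mul,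
      natCard_eq_pow_finrank (K := K) (V := e), h.dim e he]
  have hB : Nat.card B = Nat.card K ^ (2 * n + m) - Nat.card K ^ (n + m) := by
    have h1 : Nat.card B = ((H : Set V) \ (TS e : Set V)).ncard := rfl
    have h2 := Set.ncard_sdiff (s := (TS e : Set V)) (t := (H : Set V)) (h.TS_le e he) (Set.toFinite _)
    have h3 : (H : Set V).ncard = Nat.card K ^ (2 * n + m) := by
      rw [← h.dimH]
      exact natCard_eq_pow_finrank (K := K) (V := H)
    have h4 : (TS e : Set V).ncard = Nat.card K ^ (n + m) := by
      rw [← h.dimTS e he]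
      exact natCard_eq_pow_finrank (K := K) (V := TS e)
    rw [h1, h2, h3, h4]
  have hbij := hinj.bijective_of_nat_card_le (by
    rw [hA, hB, Nat.mul_sub_one, Nat.sub_mul]
    apply le_of_eq
    congr 1 <;> ring)
  obtain ⟨⟨⟨⟨f, hf, hfe⟩, ⟨v, hvf, hv⟩⟩, ⟨w, hw⟩⟩, hp⟩ := hbij.2 ⟨z, hz, hzT⟩
  have h1 : v + w = z := congrArg Subtype.val hp
  exact ⟨f, hf, hfe, v, hvf, by rw [← h1]; simpa using hw⟩

/-! ### Lines and tangent points -/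

theorem elt_eq (h : IsEgg n m H Egg TS) {W e f : Submodule K V} (he : e ∈ Egg)
    (hW : W ⊓ H = TS e) (hf : f ∈ Egg) (hfW : f ≤ W) : f = e :=
  h.eq_of_le_TS he hf (hW ▸ le_inf hfW (h.le_H f hf))

theorem elt_le (h : IsEgg n m H Egg TS) {W e : Submodule K V} (he : e ∈ Egg)
    (hW : W ⊓ H = TS e) : e ≤ W :=
  (h.le_TS e he).trans (hW.ge.trans inf_le_left)

theorem line_inf_eq (h : IsEgg n m H Egg TS) {W e U : Submodule K V} (he : e ∈ Egg)
    (hW : W ⊓ H = TS e) (hU : U ⊓ H ∈ Egg) (hUW : U ≤ W) : U ⊓ H = e :=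
  h.elt_eq he hW hU (inf_le_left.trans hUW)

theorem finrank_line (h : IsEgg n m H Egg TS) {U : Submodule K V} (hU : finrank K U = n + 1)
    (hUE : U ⊓ H ∈ Egg) : finrank K U = finrank K ↥(U ⊓ H) + 1 := by
  rw [h.dim _ hUE, hU]

theorem finrank_tangent (h : IsEgg n m H Egg TS) {W e : Submodule K V} (he : e ∈ Egg)
    (hW : finrank K W = n + m + 1) : finrank K W = finrank K (TS e) + 1 := by
  rw [h.dimTS _ he, hW]

theorem exists_mem_line [FiniteDimensional K V] (h : IsEgg n m H Egg TS) {U : Submodule K V}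
    (hU : finrank K U = n + 1) (hUE : U ⊓ H ∈ Egg) : ∃ x ∈ U, x ∉ H :=
  exists_mem_not_mem rfl (h.finrank_line hU hUE)

theorem line_unique [FiniteDimensional K V] (h : IsEgg n m H Egg TS) {U U' : Submodule K V}
    (hU : finrank K U = n + 1) (hUE : U ⊓ H ∈ Egg) (hU' : finrank K U' = n + 1)
    (heq : U' ⊓ H = U ⊓ H) {x : V} (hx : x ∉ H) (hxU : x ∈ U) (hxU' : x ∈ U') : U' = U := by
  rw [eq_sup_span rfl (h.finrank_line hU hUE) hxU hx,
    eq_sup_span heq (by rw [h.dim _ hUE, hU']) hxU' hx]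

theorem tangent_unique [FiniteDimensional K V] (h : IsEgg n m H Egg TS) {W W' e : Submodule K V}
    (he : e ∈ Egg) (hW : finrank K W = n + m + 1) (hWe : W ⊓ H = TS e)
    (hW' : finrank K W' = n + m + 1) (hWe' : W' ⊓ H = TS e) {x : V} (hx : x ∉ H)
    (hxW : x ∈ W) (hxW' : x ∈ W') : W' = W := by
  rw [eq_sup_span hWe (h.finrank_tangent he hW) hxW hx,
    eq_sup_span hWe' (h.finrank_tangent he hW') hxW' hx]

theorem exists_line [FiniteDimensional K V] (h : IsEgg n m H Egg TS) {e : Submodule K V}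
    (he : e ∈ Egg) {x : V} (hx : x ∉ H) :
    ∃ U : Submodule K V, finrank K U = n + 1 ∧ U ⊓ H = e ∧ x ∈ U := by
  refine ⟨e ⊔ K ∙ x, ?_, sup_span_inf (h.le_H e he) hx,
    (le_sup_right : K ∙ x ≤ e ⊔ K ∙ x) (Submodule.mem_span_singleton_self _)⟩
  rw [Submodule.finrank_sup_span_singleton (fun hm => hx (h.le_H e he hm)), h.dim e he]

theorem exists_tangent [FiniteDimensional K V] (h : IsEgg n m H Egg TS) {U : Submodule K V}
    (hU : finrank K U = n + 1) (hUE : U ⊓ H ∈ Egg) :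
    ∃ W : Submodule K V, finrank K W = n + m + 1 ∧ W ⊓ H = TS (U ⊓ H) ∧ U ≤ W := by
  obtain ⟨x, hxU, hx⟩ := h.exists_mem_line hU hUE
  have hT := h.TS_le _ hUE
  refine ⟨TS (U ⊓ H) ⊔ K ∙ x, ?_, sup_span_inf hT hx, ?_⟩
  · rw [Submodule.finrank_sup_span_singleton (fun hm => hx (hT hm)), h.dimTS _ hUE]
  · conv_lhs => rw [eq_sup_span rfl (h.finrank_line hU hUE) hxU hx]
    exact sup_le_sup_right (h.le_TS _ hUE) _

/-- A tangent point `W` and a line `U` with different egg elements at infinity meet in a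
projective point, which is off `H`. -/
theorem exists_mem_tangent_line [FiniteDimensional K V] (h : IsEgg n m H Egg TS)
    {U W e : Submodule K V} (hU : finrank K U = n + 1) (hUE : U ⊓ H ∈ Egg) (he : e ∈ Egg)
    (hW : finrank K W = n + m + 1) (hWe : W ⊓ H = TS e) (hne : U ⊓ H ≠ e) :
    (∃ x ∈ U, x ∈ W ∧ x ∉ H) ∧
      ∀ x ∈ U, x ∈ W → x ∉ H → ∀ y ∈ U, y ∈ W → y ∈ K ∙ x := by
  have hbot : ∀ y ∈ U, y ∈ W → y ∈ H → y = 0 := by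
    intro y hyU hyW hyH
    by_contra hy
    exact hne (h.eq_of_mem_TS he hUE hy ⟨hyU, hyH⟩ (hWe ▸ ⟨hyW, hyH⟩))
  constructor
  · have h1 := Submodule.finrank_sup_add_finrank_inf_eq U W
    have h2 := Submodule.finrank_le (U ⊔ W)
    rw [hU, hW] at h1
    rw [h.dimV] at h2
    have h3 : U ⊓ W ≠ ⊥ := by
      intro h4
      rw [h4, finrank_bot] at h1
      omega
    obtain ⟨x, hx, hx0⟩ := Submodule.exists_mem_ne_zero_of_ne_bot h3
    exact ⟨x, hx.1, hx.2, fun hxH => hx0 (hbot x hx.1 hx.2 hxH)⟩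
  · intro x hxU hxW hx y hyU hyW
    obtain ⟨c, hc⟩ := h.hyp x hx y
    have := hbot _ (U.sub_mem hyU (U.smul_mem c hxU)) (W.sub_mem hyW (W.smul_mem c hxW)) hc
    exact Submodule.mem_span_singleton.2 ⟨c, (sub_eq_zero.1 this).symm⟩

/-- Existence part of the quadrangle axiom for an affine point `x` and a line `U` off it. -/
theorem exists_collinear [Finite K] [FiniteDimensional K V] (h : IsEgg n m H Egg TS)
    {U : Submodule K V} (hU : finrank K U = n + 1) (hUE : U ⊓ H ∈ Egg) {x : V} (hx : x ∉ H) :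
    (∃ W : Submodule K V, finrank K W = n + m + 1 ∧ W ⊓ H = TS (U ⊓ H) ∧ U ≤ W ∧ x ∈ W) ∨
      ∃ f ∈ Egg, ∃ v ∈ f, x - v ∈ U := by
  obtain ⟨u, huU, hu⟩ := h.exists_mem_line hU hUE
  obtain ⟨c, hc, -⟩ := h.hyp.normalise hx hu
  by_cases hz : x - c • u ∈ TS (U ⊓ H)
  · left
    obtain ⟨W, hW, hWe, hUW⟩ := h.exists_tangent hU hUE
    refine ⟨W, hW, hWe, hUW, ?_⟩
    rw [← sub_add_cancel x (c • u)]
    exact W.add_mem ((hWe.ge.trans inf_le_left) hz) (W.smul_mem c (hUW huU))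
  · right
    obtain ⟨f, hf, -, v, hv, hvU⟩ := h.exists_cover hUE hc hz
    refine ⟨f, hf, v, hv, ?_⟩
    have h1 : x - v = (x - c • u - v) + c • u := by abel
    rw [h1]
    exact U.add_mem hvU.1 (U.smul_mem c huU)

/-- Uniqueness part of the quadrangle axiom for an affine point `x` and a line `U` off it: two
egg elements each joining `x` to `U` are equal. -/
theorem collinear_unique [FiniteDimensional K V] (h : IsEgg n m H Egg TS)
    {U f g : Submodule K V} (hUE : U ⊓ H ∈ Egg) {x : V}
    (hxU : x ∉ U) (hf : f ∈ Egg) (hg : g ∈ Egg)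
    (hf' : (∃ W : Submodule K V, W ⊓ H = TS (U ⊓ H) ∧ U ≤ W ∧ x ∈ W ∧ f = U ⊓ H) ∨
      ∃ v ∈ f, x - v ∈ U)
    (hg' : (∃ W : Submodule K V, W ⊓ H = TS (U ⊓ H) ∧ U ≤ W ∧ x ∈ W ∧ g = U ⊓ H) ∨
      ∃ v ∈ g, x - v ∈ U) : f = g := by
  have hne : ∀ k : Submodule K V, ∀ v ∈ k, x - v ∈ U → v ≠ 0 ∧ k ≠ U ⊓ H := by
    refine fun k v hv hvU => ⟨?_, ?_⟩
    · rintro rfl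
      exact hxU (by simpa using hvU)
    · rintro rfl
      exact hxU (by simpa using U.add_mem hvU hv.1)
  -- The two ways of meeting `U` exclude each other.
  have hmix : ∀ W : Submodule K V, W ⊓ H = TS (U ⊓ H) → U ≤ W → x ∈ W →
      ∀ k ∈ Egg, ∀ v ∈ k, x - v ∈ U → False := by
    intro W hW hUW hxW k hk v hv hvU
    have hvW : v ∈ W := by
      have := W.sub_mem hxW (hUW hvU)
      simpa using this
    exact (hne k v hv hvU).2 (h.eq_of_mem_TS hUE hk (hne k v hv hvU).1 hv
      (hW ▸ ⟨hvW, h.le_H k hk hv⟩))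
  rcases hf' with ⟨W, hW, hUW, hxW, rfl⟩ | ⟨v, hv, hvU⟩
  · rcases hg' with ⟨W', -, -, -, rfl⟩ | ⟨w, hw, hwU⟩
    · rfl
    · exact (hmix W hW hUW hxW g hg w hw hwU).elim
  · rcases hg' with ⟨W', hW', hUW', hxW', rfl⟩ | ⟨w, hw, hwU⟩
    · exact (hmix W' hW' hUW' hxW' f hf v hv hvU).elim
    · refine h.eq_of_sub_mem hUE hf hg (hne f v hv hvU).2 (hne g w hw hwU).2
        (hne f v hv hvU).1 hv hw ⟨?_, H.sub_mem (h.le_H f hf hv) (h.le_H g hg hw)⟩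
      have := U.sub_mem hwU hvU
      simpa using this

end IsEgg

/-! ### The incidence structure `T(E)` -/

variable (n m : ℕ) (H : Submodule K V) (Egg : Set (Submodule K V))
  (TS : Submodule K V → Submodule K V)

/-- Points of `T(E)`: the affine points, the subspaces on a tangent space, and `(∞)`. -/
abbrev Pt := ({x : Projectivization K V // ¬ x.submodule ≤ H} ⊕
  {W : Submodule K V // finrank K W = n + m + 1 ∧ ∃ e ∈ Egg, W ⊓ H = TS e}) ⊕ Unit

/-- Lines of `T(E)`: the subspaces on an egg element, and the egg elements. -/
abbrev Ln := {W : Submodule K V // finrank K W = n + 1 ∧ W ⊓ H ∈ Egg} ⊕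
  {e : Submodule K V // e ∈ Egg}

/-- Incidence of `T(E)`. -/
def Inc : Pt n m H Egg TS → Ln n H Egg → Prop
  | Sum.inl (Sum.inl x), Sum.inl W => x.1.submodule ≤ W.1
  | Sum.inl (Sum.inl _), Sum.inr _ => False
  | Sum.inl (Sum.inr W), Sum.inl U => U.1 ≤ W.1
  | Sum.inl (Sum.inr W), Sum.inr e => e.1 ≤ W.1
  | Sum.inr _, Sum.inl _ => False
  | Sum.inr _, Sum.inr _ => True

variable {n m H Egg TS}

theorem submodule_le_iff {x : Projectivization K V} {W : Submodule K V} :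
    x.submodule ≤ W ↔ x.rep ∈ W := by
  rw [Projectivization.submodule_eq, Submodule.span_singleton_le_iff_mem]

theorem exists_point {x : V} (hx : x ∉ H) :
    ∃ P : {x : Projectivization K V // ¬ x.submodule ≤ H}, P.1.submodule = K ∙ x := by
  have hx0 : x ≠ 0 := by
    rintro rfl
    exact hx H.zero_mem
  refine ⟨⟨Projectivization.mk K x hx0, ?_⟩, Projectivization.submodule_mk x hx0⟩
  rw [Projectivization.submodule_mk, Submodule.span_singleton_le_iff_mem]
  exact hx

namespace IsEgg

variable [FiniteDimensional K V]

theorem card_points [Finite K] (h : IsEgg n m H Egg TS) (l : Ln n H Egg) :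
    Nat.card {P : Pt n m H Egg TS // Inc n m H Egg TS P l} = Nat.card K ^ n + 1 := by
  have : Finite V := Module.finite_of_finite K
  have : Finite (Projectivization K V) := Finite.of_injective _ Projectivization.submodule_injective
  rw [Nat.card_congr Equiv.subtypeSum, Nat.card_sum, Nat.card_congr Equiv.subtypeSum, Nat.card_sum]
  rcases l with ⟨U, hU, hUE⟩ | ⟨e, he⟩
  · obtain ⟨u, huU, hu⟩ := h.exists_mem_line hU hUE
    have h1 : Nat.card {x : {x : Projectivization K V // ¬ x.submodule ≤ H} //
        Inc n m H Egg TS (Sum.inl (Sum.inl x)) (Sum.inl ⟨U, hU, hUE⟩)} = Nat.card K ^ n := by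
      rw [← card_ext h.hyp (S := ⊥) bot_le (rfl : U ⊓ H = U ⊓ H) huU hu
        (by rw [finrank_bot, h.dim _ hUE, zero_add])]
      refine Nat.card_eq_of_bijective (fun x => ⟨x.1.1.submodule, ⟨?_, ?_⟩, x.2⟩) ⟨?_, ?_⟩
      · rw [finrank_bot, Projectivization.finrank_submodule]
      · have hx := x.1.2
        rw [submodule_le_iff] at hx
        rw [Projectivization.submodule_eq, ← bot_sup_eq (K ∙ x.1.1.rep)]
        exact sup_span_inf bot_le hx
      · intro x y hxy
        exact Subtype.ext (Subtype.ext (Projectivization.submodule_injective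
          (congrArg Subtype.val hxy)))
      · rintro ⟨L, ⟨hL, hLH⟩, hLU⟩
        obtain ⟨x, hxL, hx⟩ := exists_mem_not_mem hLH hL
        obtain ⟨P, hP⟩ := exists_point hx
        have hPL : P.1.submodule = L := by
          rw [hP, eq_sup_span hLH hL hxL hx, bot_sup_eq]
        exact ⟨⟨P, hPL.le.trans hLU⟩, Subtype.ext hPL⟩
    have h2 : Nat.card {W : {W : Submodule K V // finrank K W = n + m + 1 ∧
        ∃ e ∈ Egg, W ⊓ H = TS e} //
        Inc n m H Egg TS (Sum.inl (Sum.inr W)) (Sum.inl ⟨U, hU, hUE⟩)} = 1 := by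
      obtain ⟨W, hW, hWe, hUW⟩ := h.exists_tangent hU hUE
      refine Nat.card_eq_one_iff_exists.2 ⟨⟨⟨W, hW, _, hUE, hWe⟩, hUW⟩, ?_⟩
      rintro ⟨⟨W', hW', e, he, hWe'⟩, hUW'⟩
      obtain rfl := h.line_inf_eq he hWe' hUE hUW'
      exact Subtype.ext (Subtype.ext
        (h.tangent_unique he hW hWe hW' hWe' hu (hUW huU) (hUW' huU)))
    have h3 : Nat.card {u : Unit // Inc n m H Egg TS (Sum.inr u) (Sum.inl ⟨U, hU, hUE⟩)} = 0 := by
      have : IsEmpty {u : Unit // Inc n m H Egg TS (Sum.inr u) (Sum.inl ⟨U, hU, hUE⟩)} :=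
        ⟨fun u => u.2⟩
      exact Nat.card_of_isEmpty
    rw [h1, h2, h3]
  · have h1 : Nat.card {x : {x : Projectivization K V // ¬ x.submodule ≤ H} //
        Inc n m H Egg TS (Sum.inl (Sum.inl x)) (Sum.inr ⟨e, he⟩)} = 0 := by
      have : IsEmpty {x : {x : Projectivization K V // ¬ x.submodule ≤ H} //
        Inc n m H Egg TS (Sum.inl (Sum.inl x)) (Sum.inr ⟨e, he⟩)} := ⟨fun u => u.2⟩
      exact Nat.card_of_isEmpty
    have h2 : Nat.card {W : {W : Submodule K V // finrank K W = n + m + 1 ∧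
        ∃ e ∈ Egg, W ⊓ H = TS e} //
        Inc n m H Egg TS (Sum.inl (Sum.inr W)) (Sum.inr ⟨e, he⟩)} = Nat.card K ^ n := by
      obtain ⟨x, -, hx⟩ := exists_mem_not_mem (U := ⊤) (top_inf_eq H)
        (by rw [finrank_top, h.dimV, h.dimH])
      rw [← card_ext h.hyp (h.TS_le e he) (top_inf_eq H) (Submodule.mem_top (x := x)) hx
        (a := n) (by rw [h.dimTS _ he, h.dimH]; ring)]
      refine Nat.card_eq_of_bijective (fun W => ⟨W.1.1, ⟨?_, ?_⟩, le_top⟩) ⟨?_, ?_⟩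
      · rw [W.1.2.1, h.dimTS _ he]
      · obtain ⟨⟨W, hW, f, hf, hWf⟩, heW⟩ := W
        exact hWf.trans (congrArg TS (h.elt_eq hf hWf he heW).symm)
      · intro x y hxy
        have h1 := congrArg Subtype.val hxy
        exact Subtype.ext (Subtype.ext h1)
      · rintro ⟨W, ⟨hW, hWe⟩, -⟩
        exact ⟨⟨⟨W, by rw [hW, h.dimTS _ he], e, he, hWe⟩, h.elt_le he hWe⟩, rfl⟩
    have h3 : Nat.card {u : Unit // Inc n m H Egg TS (Sum.inr u) (Sum.inr ⟨e, he⟩)} = 1 :=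
      Nat.card_eq_one_iff_exists.2 ⟨⟨(), trivial⟩, fun _ => rfl⟩
    rw [h1, h2, h3, zero_add]

theorem card_lines [Finite K] (h : IsEgg n m H Egg TS) (P : Pt n m H Egg TS) :
    Nat.card {l : Ln n H Egg // Inc n m H Egg TS P l} = Nat.card K ^ m + 1 := by
  have : Finite V := Module.finite_of_finite K
  rw [Nat.card_congr Equiv.subtypeSum, Nat.card_sum]
  rcases P with (⟨x, hx⟩ | ⟨W, hW, e, he, hWe⟩) | u
  · rw [← h.card]
    have h2 : Nat.card {e : {e : Submodule K V // e ∈ Egg} //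
        Inc n m H Egg TS (Sum.inl (Sum.inl ⟨x, hx⟩)) (Sum.inr e)} = 0 := by
      have : IsEmpty {e : {e : Submodule K V // e ∈ Egg} //
        Inc n m H Egg TS (Sum.inl (Sum.inl ⟨x, hx⟩)) (Sum.inr e)} := ⟨fun u => u.2⟩
      exact Nat.card_of_isEmpty
    rw [h2, add_zero]
    refine Nat.card_eq_of_bijective (fun U => ⟨U.1.1 ⊓ H, U.1.2.2⟩) ⟨?_, ?_⟩
    · rintro ⟨⟨U, hU, hUE⟩, hxU⟩ ⟨⟨U', hU', hUE'⟩, hxU'⟩ heq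
      exact Subtype.ext (Subtype.ext (h.line_unique hU' hUE' hU (congrArg Subtype.val heq)
        (submodule_le_iff.not.1 hx) (submodule_le_iff.1 hxU') (submodule_le_iff.1 hxU)))
    · rintro ⟨e, he⟩
      obtain ⟨U, hU, rfl, hxU⟩ := h.exists_line he (submodule_le_iff.not.1 hx)
      exact ⟨⟨⟨U, hU, he⟩, submodule_le_iff.2 hxU⟩, rfl⟩
  · have h1 : Nat.card {U : {W : Submodule K V // finrank K W = n + 1 ∧ W ⊓ H ∈ Egg} //
        Inc n m H Egg TS (Sum.inl (Sum.inr ⟨W, hW, e, he, hWe⟩)) (Sum.inl U)} =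
        Nat.card K ^ m := by
      obtain ⟨x, hxW, hx⟩ := exists_mem_not_mem hWe (h.finrank_tangent he hW)
      rw [← card_ext h.hyp (h.le_TS e he) hWe hxW hx (by rw [h.dimTS _ he, h.dim e he])]
      refine Nat.card_eq_of_bijective (fun U => ⟨U.1.1, ⟨?_, ?_⟩, U.2⟩) ⟨?_, ?_⟩
      · rw [U.1.2.1, h.dim _ he]
      · exact h.line_inf_eq he hWe U.1.2.2 U.2
      · intro x y hxy
        have h1 := congrArg Subtype.val hxy
        exact Subtype.ext (Subtype.ext h1)
      · rintro ⟨U, ⟨hU, rfl⟩, hUW⟩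
        exact ⟨⟨⟨U, by rw [hU, h.dim _ he], he⟩, hUW⟩, rfl⟩
    have h2 : Nat.card {f : {e : Submodule K V // e ∈ Egg} //
        Inc n m H Egg TS (Sum.inl (Sum.inr ⟨W, hW, e, he, hWe⟩)) (Sum.inr f)} = 1 := by
      refine Nat.card_eq_one_iff_exists.2 ⟨⟨⟨e, he⟩, h.elt_le he hWe⟩, ?_⟩
      rintro ⟨⟨f, hf⟩, hfW⟩
      exact Subtype.ext (Subtype.ext (h.elt_eq he hWe hf hfW))
    rw [h1, h2]
  · rw [← h.card]
    have h1 : Nat.card {U : {W : Submodule K V // finrank K W = n + 1 ∧ W ⊓ H ∈ Egg} //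
        Inc n m H Egg TS (Sum.inr u) (Sum.inl U)} = 0 := by
      have : IsEmpty {U : {W : Submodule K V // finrank K W = n + 1 ∧ W ⊓ H ∈ Egg} //
        Inc n m H Egg TS (Sum.inr u) (Sum.inl U)} := ⟨fun u => u.2⟩
      exact Nat.card_of_isEmpty
    rw [h1, zero_add]
    exact Nat.card_congr (Equiv.subtypeUnivEquiv fun _ => trivial)

/-- A line off `H` is on at most one tangent point. -/
theorem tangent_eq (h : IsEgg n m H Egg TS) (U : Submodule K V) (hU : finrank K U = n + 1)
    (hUE : U ⊓ H ∈ Egg)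
    (W W' : {W : Submodule K V // finrank K W = n + m + 1 ∧ ∃ e ∈ Egg, W ⊓ H = TS e})
    (hUW : U ≤ W.1) (hUW' : U ≤ W'.1) : W = W' := by
  obtain ⟨x, hxU, hx⟩ := h.exists_mem_line hU hUE
  obtain ⟨W, hW, e, he, hWe⟩ := W
  obtain ⟨W', hW', f, hf, hWf⟩ := W'
  obtain rfl := h.line_inf_eq he hWe hUE hUW
  obtain rfl := h.line_inf_eq hf hWf hUE hUW'
  exact Subtype.ext (h.tangent_unique he hW' hWf hW hWe hx (hUW' hxU) (hUW hxU))

theorem eq_of_two_points (h : IsEgg n m H Egg TS) (P Q : Pt n m H Egg TS) (l l' : Ln n H Egg)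
    (hPQ : P ≠ Q) (hPl : Inc n m H Egg TS P l) (hQl : Inc n m H Egg TS Q l)
    (hPl' : Inc n m H Egg TS P l') (hQl' : Inc n m H Egg TS Q l') : l = l' := by
  have aff : ∀ (x : {x : Projectivization K V // ¬ x.submodule ≤ H})
      (U U' : {W : Submodule K V // finrank K W = n + 1 ∧ W ⊓ H ∈ Egg}),
      U.1 ⊓ H = U'.1 ⊓ H → x.1.submodule ≤ U.1 → x.1.submodule ≤ U'.1 → U = U' :=
    fun x U U' heq hxU hxU' => Subtype.ext (h.line_unique U'.2.1 U'.2.2 U.2.1 heq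
      (submodule_le_iff.not.1 x.2) (submodule_le_iff.1 hxU') (submodule_le_iff.1 hxU))
  have tan : ∀ (W : {W : Submodule K V // finrank K W = n + m + 1 ∧ ∃ e ∈ Egg, W ⊓ H = TS e})
      (U U' : {W : Submodule K V // finrank K W = n + 1 ∧ W ⊓ H ∈ Egg}),
      U.1 ≤ W.1 → U'.1 ≤ W.1 → U.1 ⊓ H = U'.1 ⊓ H := by
    rintro ⟨W, hW, e, he, hWe⟩ U U' hU hU'
    rw [h.line_inf_eq he hWe U.2.2 hU, h.line_inf_eq he hWe U'.2.2 hU']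
  rcases l with U | e <;> rcases l' with U' | e'
  · congr 1
    rcases P with (x | W) | u
    · rcases Q with (y | W') | u'
      · refine aff x U U' ?_ hPl hPl'
        -- The line joining the two affine points meets `H` in a vector of both egg elements.
        have hx := submodule_le_iff.not.1 x.2
        have hy := submodule_le_iff.not.1 y.2
        obtain ⟨c, hc⟩ := h.hyp _ hx y.1.rep
        have hne : y.1.rep - c • x.1.rep ≠ 0 := by
          intro h0
          apply hPQ
          have hle : y.1.submodule ≤ x.1.submodule := by
            rw [submodule_le_iff, sub_eq_zero.1 h0]
            exact x.1.submodule.smul_mem c (submodule_le_iff.1 le_rfl)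
          have := Submodule.eq_of_le_of_finrank_eq hle
            (by rw [Projectivization.finrank_submodule, Projectivization.finrank_submodule])
          rw [Subtype.ext (Projectivization.submodule_injective this)]
        have hmem : ∀ L : Submodule K V, x.1.submodule ≤ L → y.1.submodule ≤ L →
            y.1.rep - c • x.1.rep ∈ L ⊓ H := fun L hxL hyL =>
          ⟨L.sub_mem (submodule_le_iff.1 hyL) (L.smul_mem c (submodule_le_iff.1 hxL)), hc⟩
        exact h.eq_of_mem_TS U'.2.2 U.2.2 hne (hmem U.1 hPl hQl)
          (h.le_TS _ U'.2.2 (hmem U'.1 hPl' hQl'))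
      · exact aff x U U' (tan W' U U' hQl hQl') hPl hPl'
      · exact hQl.elim
    · rcases Q with (y | W') | u'
      · exact aff y U U' (tan W U U' hPl hPl') hQl hQl'
      · exfalso
        exact hPQ (by rw [h.tangent_eq U.1 U.2.1 U.2.2 W W' hPl hQl])
      · exact hQl.elim
    · exact hPl.elim
  · exfalso
    rcases P with (x | W) | u
    · exact hPl'
    · rcases Q with (y | W') | u'
      · exact hQl'
      · exact hPQ (by rw [h.tangent_eq U.1 U.2.1 U.2.2 W W' hPl hQl])
      · exact hQl
    · exact hPl
  · exfalso
    rcases P with (x | W) | u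
    · exact hPl
    · rcases Q with (y | W') | u'
      · exact hQl
      · exact hPQ (by rw [h.tangent_eq U'.1 U'.2.1 U'.2.2 W W' hPl' hQl'])
      · exact hQl'
    · exact hPl'
  · congr 1
    rcases P with (x | W) | u
    · exact hPl.elim
    · obtain ⟨W, hW, f, hf, hWf⟩ := W
      exact Subtype.ext ((h.elt_eq hf hWf e.2 hPl).trans (h.elt_eq hf hWf e'.2 hPl').symm)
    · rcases Q with (y | W') | u'
      · exact hQl.elim
      · obtain ⟨W, hW, f, hf, hWf⟩ := W'
        exact Subtype.ext ((h.elt_eq hf hWf e.2 hQl).trans (h.elt_eq hf hWf e'.2 hQl').symm)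
      · exact (hPQ rfl).elim

/-- The quadrangle axiom when the point is `(∞)`. -/
theorem gq_infinity (h : IsEgg n m H Egg TS) (u : Unit) (l : Ln n H Egg)
    (hPl : ¬ Inc n m H Egg TS (Sum.inr u) l) :
    ∃! l' : Ln n H Egg, Inc n m H Egg TS (Sum.inr u) l' ∧
      ∃ Q : Pt n m H Egg TS, Inc n m H Egg TS Q l' ∧ Inc n m H Egg TS Q l := by
  rcases l with ⟨U, hU, hUE⟩ | e
  · obtain ⟨W, hW, hWe, hUW⟩ := h.exists_tangent hU hUE
    refine ⟨Sum.inr ⟨U ⊓ H, hUE⟩, ⟨trivial, Sum.inl (Sum.inr ⟨W, hW, _, hUE, hWe⟩),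
      inf_le_left.trans hUW, hUW⟩, ?_⟩
    rintro (U' | ⟨f, hf⟩) ⟨hP, (Q | ⟨W', hW', e, he, hWe'⟩) | Q, hQ, hQ'⟩
    · exact hP.elim
    · exact hP.elim
    · exact hP.elim
    · exact hQ.elim
    · rw [Sum.inr.injEq, Subtype.mk.injEq]
      exact (h.elt_eq he hWe' hf hQ).trans (h.line_inf_eq he hWe' hUE hQ').symm
    · exact hQ'.elim
  · exact (hPl trivial).elim

/-- The quadrangle axiom when the point is a subspace on a tangent space. -/
theorem gq_tangent (h : IsEgg n m H Egg TS)
    (W : {W : Submodule K V // finrank K W = n + m + 1 ∧ ∃ e ∈ Egg, W ⊓ H = TS e})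
    (l : Ln n H Egg) (hPl : ¬ Inc n m H Egg TS (Sum.inl (Sum.inr W)) l) :
    ∃! l' : Ln n H Egg, Inc n m H Egg TS (Sum.inl (Sum.inr W)) l' ∧
      ∃ Q : Pt n m H Egg TS, Inc n m H Egg TS Q l' ∧ Inc n m H Egg TS Q l := by
  obtain ⟨W, hW, e, he, hWe⟩ := W
  rcases l with ⟨U, hU, hUE⟩ | ⟨f, hf⟩
  · by_cases hne : U ⊓ H = e
    · -- Same egg element at infinity: the two meet in the line `e`.
      subst hne
      obtain ⟨W₁, hW₁, hWe₁, hUW₁⟩ := h.exists_tangent hU hUE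
      refine ⟨Sum.inr ⟨U ⊓ H, hUE⟩, ⟨h.elt_le hUE hWe,
        Sum.inl (Sum.inr ⟨W₁, hW₁, _, hUE, hWe₁⟩), inf_le_left.trans hUW₁, hUW₁⟩, ?_⟩
      rintro (⟨U', hU', hUE'⟩ | ⟨f, hf⟩) ⟨hP, Q, hQ, hQ'⟩
      · exfalso
        have hinf : U' ⊓ H = U ⊓ H := h.line_inf_eq he hWe hUE' hP
        rcases Q with (x | W') | u
        · apply hPl
          obtain rfl := h.line_unique hU hUE hU' hinf (submodule_le_iff.not.1 x.2)
            (submodule_le_iff.1 hQ') (submodule_le_iff.1 hQ)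
          exact hP
        · obtain rfl := h.tangent_eq U' hU' hUE' W' ⟨W, hW, _, he, hWe⟩ hQ hP
          exact hPl hQ'
        · exact hQ
      · rw [Sum.inr.injEq, Subtype.mk.injEq]
        exact h.elt_eq he hWe hf hP
    · -- Different egg elements: join the point `U ∩ W` to `e`.
      obtain ⟨⟨x, hxU, hxW, hx⟩, huniq⟩ := h.exists_mem_tangent_line hU hUE he hW hWe hne
      obtain ⟨L, hL, rfl, hxL⟩ := h.exists_line he hx
      obtain ⟨P, hP⟩ := exists_point hx
      have hPle : ∀ S : Submodule K V, x ∈ S → P.1.submodule ≤ S := fun S hS => by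
        rw [hP, Submodule.span_singleton_le_iff_mem]
        exact hS
      have hLW : L ≤ W := by
        rw [eq_sup_span rfl (h.finrank_line hL he) hxL hx]
        exact sup_le (h.elt_le he hWe) (by simpa using hxW)
      refine ⟨Sum.inl ⟨L, hL, he⟩, ⟨hLW, Sum.inl (Sum.inl P), hPle L hxL, hPle U hxU⟩, ?_⟩
      rintro (⟨U', hU', hUE'⟩ | ⟨f, hf⟩) ⟨hP', (Q | ⟨W', hW', g, hg, hWg⟩) | Q, hQ, hQ'⟩
      · have hinf : U' ⊓ H = L ⊓ H := h.line_inf_eq he hWe hUE' hP'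
        have hQx := huniq x hxU hxW hx _ (submodule_le_iff.1 hQ')
          (hP' (submodule_le_iff.1 hQ))
        rw [Sum.inl.injEq, Subtype.mk.injEq]
        refine h.line_unique hL he hU' hinf (submodule_le_iff.not.1 Q.2) ?_
          (submodule_le_iff.1 hQ)
        exact (Submodule.span_singleton_le_iff_mem x L).2 hxL hQx
      · refine (hne ?_).elim
        rw [h.line_inf_eq hg hWg hUE hQ', ← h.line_inf_eq hg hWg hUE' hQ]
        exact h.line_inf_eq he hWe hUE' hP'
      · exact hQ.elim
      · exact hQ.elim
      · refine (hne ?_).elim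
        rw [h.line_inf_eq hg hWg hUE hQ', ← h.elt_eq hg hWg hf hQ]
        exact h.elt_eq he hWe hf hP'
      · exact hQ'.elim
  · refine ⟨Sum.inr ⟨e, he⟩, ⟨h.elt_le he hWe, Sum.inr (), trivial, trivial⟩, ?_⟩
    rintro (⟨U', hU', hUE'⟩ | ⟨g, hg⟩) ⟨hP', Q, hQ, hQ'⟩
    · exfalso
      rcases Q with (x | ⟨W', hW', g, hg, hWg⟩) | Q
      · exact hQ'
      · obtain rfl := h.line_inf_eq he hWe hUE' hP'
        obtain rfl := h.line_inf_eq hg hWg hUE' hQ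
        obtain rfl := h.elt_eq hg hWg hf hQ'
        exact hPl (h.elt_le he hWe)
      · exact hQ
    · rw [Sum.inr.injEq, Subtype.mk.injEq]
      exact h.elt_eq he hWe hg hP'

/-- The quadrangle axiom when the point is affine. -/
theorem gq_affine [Finite K] (h : IsEgg n m H Egg TS)
    (P : {x : Projectivization K V // ¬ x.submodule ≤ H})
    (l : Ln n H Egg) (hPl : ¬ Inc n m H Egg TS (Sum.inl (Sum.inl P)) l) :
    ∃! l' : Ln n H Egg, Inc n m H Egg TS (Sum.inl (Sum.inl P)) l' ∧
      ∃ Q : Pt n m H Egg TS, Inc n m H Egg TS Q l' ∧ Inc n m H Egg TS Q l := by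
  have hx := submodule_le_iff.not.1 P.2
  set x := P.1.rep with hxdef
  rcases l with ⟨U, hU, hUE⟩ | ⟨e, he⟩
  · have hxU : x ∉ U := fun hm => hPl (submodule_le_iff.2 hm)
    -- The line through `x` on an egg element `f` meets `U` exactly in the situations of
    -- `collinear_unique`.
    have hchar : ∀ U' : {W : Submodule K V // finrank K W = n + 1 ∧ W ⊓ H ∈ Egg}, x ∈ U'.1 →
        (∃ Q : Pt n m H Egg TS, Inc n m H Egg TS Q (Sum.inl U') ∧
          Inc n m H Egg TS Q (Sum.inl ⟨U, hU, hUE⟩)) →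
        (∃ W : Submodule K V, W ⊓ H = TS (U ⊓ H) ∧ U ≤ W ∧ x ∈ W ∧ U'.1 ⊓ H = U ⊓ H) ∨
          ∃ v ∈ U'.1 ⊓ H, x - v ∈ U := by
      rintro ⟨U', hU', hUE'⟩ hxU' ⟨(Q | ⟨W', hW', g, hg, hWg⟩) | Q, hQ, hQ'⟩
      · right
        obtain ⟨c, hc, -⟩ := h.hyp.normalise hx (submodule_le_iff.not.1 Q.2)
        refine ⟨x - c • Q.1.rep,
          ⟨U'.sub_mem hxU' (U'.smul_mem c (submodule_le_iff.1 hQ)), hc⟩, ?_⟩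
        rw [sub_sub_cancel]
        exact U.smul_mem c (submodule_le_iff.1 hQ')
      · left
        obtain rfl := h.line_inf_eq hg hWg hUE hQ'
        exact ⟨W', hWg, hQ', hQ hxU', h.line_inf_eq hg hWg hUE' hQ⟩
      · exact hQ.elim
    have hexists : ∃ U' : {W : Submodule K V // finrank K W = n + 1 ∧ W ⊓ H ∈ Egg}, x ∈ U'.1 ∧
        ∃ Q : Pt n m H Egg TS, Inc n m H Egg TS Q (Sum.inl U') ∧
          Inc n m H Egg TS Q (Sum.inl ⟨U, hU, hUE⟩) := by
      rcases h.exists_collinear hU hUE hx with ⟨W, hW, hWe, hUW, hxW⟩ | ⟨f, hf, v, hv, hvU⟩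
      · obtain ⟨L, hL, hLU, hxL⟩ := h.exists_line hUE hx
        refine ⟨⟨L, hL, hLU ▸ hUE⟩, hxL, Sum.inl (Sum.inr ⟨W, hW, _, hUE, hWe⟩), ?_, hUW⟩
        change L ≤ W
        rw [eq_sup_span hLU (by rw [h.dim _ hUE, hL]) hxL hx]
        exact sup_le (h.elt_le hUE hWe) (by simpa using hxW)
      · obtain ⟨L, hL, rfl, hxL⟩ := h.exists_line hf hx
        have hxv : x - v ∉ H := fun hm => hx (by simpa using H.add_mem hm hv.2)
        obtain ⟨Q, hQ⟩ := exists_point hxv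
        refine ⟨⟨L, hL, hf⟩, hxL, Sum.inl (Sum.inl Q), ?_, ?_⟩
        · change Q.1.submodule ≤ L
          rw [hQ, Submodule.span_singleton_le_iff_mem]
          exact L.sub_mem hxL hv.1
        · change Q.1.submodule ≤ U
          rwa [hQ, Submodule.span_singleton_le_iff_mem]
    obtain ⟨L, hxL, hQ⟩ := hexists
    refine ⟨Sum.inl L, ⟨submodule_le_iff.2 hxL, hQ⟩, ?_⟩
    rintro (U' | f) ⟨hP', hQ'⟩
    · have hxU' : x ∈ U'.1 := submodule_le_iff.1 hP'
      rw [Sum.inl.injEq]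
      refine Subtype.ext (h.line_unique L.2.1 L.2.2 U'.2.1 ?_ hx hxL hxU')
      exact h.collinear_unique hUE hxU U'.2.2 L.2.2 (hchar U' hxU' hQ') (hchar L hxL hQ)
    · exact hP'.elim
  · obtain ⟨L, hL, rfl, hxL⟩ := h.exists_line he hx
    obtain ⟨W, hW, hWe, hLW⟩ := h.exists_tangent hL he
    refine ⟨Sum.inl ⟨L, hL, he⟩, ⟨submodule_le_iff.2 hxL,
      Sum.inl (Sum.inr ⟨W, hW, _, he, hWe⟩), hLW, inf_le_left.trans hLW⟩, ?_⟩
    rintro (⟨U', hU', hUE'⟩ | f) ⟨hP', (Q | ⟨W', hW', g, hg, hWg⟩) | Q, hQ, hQ'⟩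
    · exact hQ'.elim
    · rw [Sum.inl.injEq, Subtype.mk.injEq]
      refine h.line_unique hL he hU' ?_ hx hxL (submodule_le_iff.1 hP')
      exact (h.line_inf_eq hg hWg hUE' hQ).trans (h.elt_eq hg hWg he hQ').symm
    · exact hQ.elim
    · exact hP'.elim
    · exact hP'.elim
    · exact hP'.elim

end IsEgg

end EggGQ


/-- The incidence structure `T(E)` constructed from an egg `E_{n,m}` of a hyperplane
`H∞ = PG(2n+m-1,q)` of `Π = PG(2n+m,q)` is a generalised quadrangle of order
`(q^n, q^m)`.  Points: (i) projective points off `H∞`; (ii) `(n+m)`-dimensional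
subspaces of `Π` meeting `H∞` in a tangent space of the egg; (iii) a symbol `(∞)`.
Lines: (a) `n`-dimensional subspaces of `Π` meeting `H∞` in an egg element;
(b) the egg elements. -/
theorem TE_is_generalised_quadrangle
    (p h n m : ℕ) (hp : p.Prime) (hh : 1 ≤ h) (hn : 1 ≤ n) (hm : 1 ≤ m)
    (K : Type*) [Field K] [Fintype K] (hK : Fintype.card K = p ^ h)
    (H : Submodule K (Fin (2 * n + m + 1) → K))
    (hH : Module.finrank K H = 2 * n + m)
    (Egg : Set (Submodule K (Fin (2 * n + m + 1) → K)))
    (hcard : Nat.card Egg = p ^ (h * m) + 1)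
    (hdim : ∀ E ∈ Egg, E ≤ H ∧ Module.finrank K E = n)
    (hspan3 : ∀ E ∈ Egg, ∀ F ∈ Egg, ∀ G ∈ Egg, E ≠ F → E ≠ G → F ≠ G →
      Module.finrank K ↥(E ⊔ F ⊔ G) = 3 * n)
    (TS : Submodule K (Fin (2 * n + m + 1) → K) → Submodule K (Fin (2 * n + m + 1) → K))
    (hTS : ∀ E ∈ Egg, E ≤ TS E ∧ TS E ≤ H ∧ Module.finrank K (TS E) = n + m ∧
      ∀ F ∈ Egg, F ≠ E → F ⊓ TS E = ⊥) :
    ∀ I : (({x : Projectivization K (Fin (2 * n + m + 1) → K) // ¬ x.submodule ≤ H} ⊕ {W : Submodule K (Fin (2 * n + m + 1) → K) // Module.finrank K W = n + m + 1 ∧ ∃ e ∈ Egg, W ⊓ H = TS e}) ⊕ Unit) → ({W : Submodule K (Fin (2 * n + m + 1) → K) // Module.finrank K W = n + 1 ∧ W ⊓ H ∈ Egg} ⊕ {e : Submodule K (Fin (2 * n + m + 1) → K) // e ∈ Egg}) → Prop,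
      I = (fun P l =>
        match P, l with
        | Sum.inl (Sum.inl x), Sum.inl W => x.1.submodule ≤ W.1
        | Sum.inl (Sum.inl _), Sum.inr _ => False
        | Sum.inl (Sum.inr W), Sum.inl U => U.1 ≤ W.1
        | Sum.inl (Sum.inr W), Sum.inr e => e.1 ≤ W.1
        | Sum.inr _, Sum.inl _ => False
        | Sum.inr _, Sum.inr _ => True) →
      -- every line has s + 1 = q^n + 1 points
      (∀ l : ({W : Submodule K (Fin (2 * n + m + 1) → K) // Module.finrank K W = n + 1 ∧ W ⊓ H ∈ Egg} ⊕ {e : Submodule K (Fin (2 * n + m + 1) → K) // e ∈ Egg}), Nat.card {P : (({x : Projectivization K (Fin (2 * n + m + 1) → K) // ¬ x.submodule ≤ H} ⊕ {W : Submodule K (Fin (2 * n + m + 1) → K) // Module.finrank K W = n + m + 1 ∧ ∃ e ∈ Egg, W ⊓ H = TS e}) ⊕ Unit) // I P l} = p ^ (h * n) + 1) ∧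
      -- every point lies on t + 1 = q^m + 1 lines
      (∀ P : (({x : Projectivization K (Fin (2 * n + m + 1) → K) // ¬ x.submodule ≤ H} ⊕ {W : Submodule K (Fin (2 * n + m + 1) → K) // Module.finrank K W = n + m + 1 ∧ ∃ e ∈ Egg, W ⊓ H = TS e}) ⊕ Unit), Nat.card {l : ({W : Submodule K (Fin (2 * n + m + 1) → K) // Module.finrank K W = n + 1 ∧ W ⊓ H ∈ Egg} ⊕ {e : Submodule K (Fin (2 * n + m + 1) → K) // e ∈ Egg}) // I P l} = p ^ (h * m) + 1) ∧
      -- two distinct points lie on at most one common line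
      (∀ P Q : (({x : Projectivization K (Fin (2 * n + m + 1) → K) // ¬ x.submodule ≤ H} ⊕ {W : Submodule K (Fin (2 * n + m + 1) → K) // Module.finrank K W = n + m + 1 ∧ ∃ e ∈ Egg, W ⊓ H = TS e}) ⊕ Unit), ∀ l l' : ({W : Submodule K (Fin (2 * n + m + 1) → K) // Module.finrank K W = n + 1 ∧ W ⊓ H ∈ Egg} ⊕ {e : Submodule K (Fin (2 * n + m + 1) → K) // e ∈ Egg}), P ≠ Q →
        I P l → I Q l → I P l' → I Q l' → l = l') ∧
      -- the generalised quadrangle axiom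
      (∀ (P : (({x : Projectivization K (Fin (2 * n + m + 1) → K) // ¬ x.submodule ≤ H} ⊕ {W : Submodule K (Fin (2 * n + m + 1) → K) // Module.finrank K W = n + m + 1 ∧ ∃ e ∈ Egg, W ⊓ H = TS e}) ⊕ Unit)) (l : ({W : Submodule K (Fin (2 * n + m + 1) → K) // Module.finrank K W = n + 1 ∧ W ⊓ H ∈ Egg} ⊕ {e : Submodule K (Fin (2 * n + m + 1) → K) // e ∈ Egg})), ¬ I P l →
        ∃! l' : ({W : Submodule K (Fin (2 * n + m + 1) → K) // Module.finrank K W = n + 1 ∧ W ⊓ H ∈ Egg} ⊕ {e : Submodule K (Fin (2 * n + m + 1) → K) // e ∈ Egg}), I P l' ∧ ∃ Q : (({x : Projectivization K (Fin (2 * n + m + 1) → K) // ¬ x.submodule ≤ H} ⊕ {W : Submodule K (Fin (2 * n + m + 1) → K) // Module.finrank K W = n + m + 1 ∧ ∃ e ∈ Egg, W ⊓ H = TS e}) ⊕ Unit), I Q l' ∧ I Q l) := by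
  intro I hI
  have hq : Nat.card K = p ^ h := by rw [Nat.card_eq_fintype_card, hK]
  have hegg : EggGQ.IsEgg n m H Egg TS :=
    { hn := hn
      dimV := by simp
      dimH := hH
      card := by rw [hcard, hq, pow_mul]
      le_H := fun E hE => (hdim E hE).1
      dim := fun E hE => (hdim E hE).2
      span3 := hspan3
      le_TS := fun E hE => (hTS E hE).1
      TS_le := fun E hE => (hTS E hE).2.1
      dimTS := fun E hE => (hTS E hE).2.2.1
      disj := fun E hE => (hTS E hE).2.2.2 }
  have hInc : I = EggGQ.Inc n m H Egg TS := by
    subst hI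
    funext P l
    rcases P with (x | W) | u <;> rcases l with U | e <;> rfl
  subst hInc
  rw [pow_mul, pow_mul, ← hq]
  refine ⟨hegg.card_points, hegg.card_lines, hegg.eq_of_two_points, ?_⟩
  rintro ((x | W) | u) l hPl
  · exact hegg.gq_affine x l hPl
  · exact hegg.gq_tangent W l hPl
  · exact hegg.gq_infinity u l hPl
end

section
/- The minimum distance of the p-ary code of points and lines of a translation generalised quadrangle T(E) of order (s,t) = (q^n, q^m), with q = p^h and p prime, equals s + 1 = q^n + 1. -/
/-!
Fix a vector `v₀` off `H`. Affine points are then the elements of `G = H`, points of type (ii) are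
the cosets of the tangent spaces `T i` in `G`, and lines of type (a) are the cosets of the egg
elements `E i`. Only the structure of `G` as a vector space over `𝔽_p` is used. Write `s = q ^ n`
and `t = q ^ m`, so that `|G| = s² t`, `|E i| = s` and `|T i| = s t`.

Lines have `s + 1` points, so it suffices to bound the weight of a nonzero codeword `c` below.

*Nonzero affine part.* The affine part `f` of `c` is a combination of indicators of cosets of the
`E i`, so it is a polynomial function of degree at most `(p - 1) k` with `p ^ k = s t`. A nonzero
function of degree `d` on `𝔽_p ^ D` has at least `p ^ (D - d / (p - 1))` nonzeros
(`affFun_weight`), which gives at least `s` affine points in the support. If the support has no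
point of type (ii), one more point is needed. The indicators of two cosets of `E i` differ by a
function of degree less than `(p - 1) k`, so the part of `f` of degree `(p - 1) k` depends only on
the total coefficient of the lines in each direction `E i`. That total equals the sum of `c` over
the cosets of `T i` (`EggModel.degree_relations`). Here it vanishes, so the degree of `f` drops and
the bound becomes strict.

*Zero affine part.* By the quadrangle axiom, obtained from the general position of the egg by
counting (`EggModel.exists_unique_join`), the sum of `c` over the points collinear with a given
point is a constant `σ` (`EggModel.dual_relations`). If `σ = 0`, every affine point of a coset in
the support lies on a second such coset; as `T i` and `T j` meet in `t` elements, at least `s`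
further cosets are needed. If `σ ≠ 0`, the cosets in the support cover `G`, so there are at least
`s` of them. Either `∞` is in the support too, or the support contains cosets in two different
directions; these overlap, so that `s` cosets cannot cover `G`.
-/

attribute [local instance] Classical.propDecidable

set_option linter.unusedSectionVars false

/-! ### Functions of bounded degree -/

section Degree

variable (p : ℕ) (G : Type*) [AddCommGroup G] [Module (ZMod p) G]

/-- The space of affine functions `G → 𝔽_p` (a linear functional plus a constant). Its power
`affFun p G ^ d`, taken in the algebra of all functions, is the space of functions of
degree at most `d`. -/
def affFun : Submodule (ZMod p) (G → ZMod p) where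
  carrier := {f | ∃ (l : Module.Dual (ZMod p) G) (r : ZMod p), f = fun x => l x + r}
  add_mem' := by
    rintro _ _ ⟨l, r, rfl⟩ ⟨l', r', rfl⟩
    exact ⟨l + l', r + r', by ext x; simp; ring⟩
  zero_mem' := ⟨0, 0, by ext x; simp⟩
  smul_mem' := by
    rintro k _ ⟨l, r, rfl⟩
    exact ⟨k • l, k * r, by ext x; simp; ring⟩

variable {p G}

lemma affFun_intro (l : Module.Dual (ZMod p) G) (r : ZMod p) :
    (fun x => l x + r) ∈ affFun p G := ⟨l, r, rfl⟩

lemma one_le_affFun : (1 : Submodule (ZMod p) (G → ZMod p)) ≤ affFun p G := by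
  rw [Submodule.one_le]
  exact ⟨0, 1, by ext x; simp⟩

lemma affFun_mono {d d' : ℕ} (h : d ≤ d') : affFun p G ^ d ≤ affFun p G ^ d' :=
  pow_le_pow_right' one_le_affFun h

lemma affFun_mul {d d' : ℕ} {f g : G → ZMod p} (hf : f ∈ affFun p G ^ d)
    (hg : g ∈ affFun p G ^ d') : f * g ∈ affFun p G ^ (d + d') := by
  rw [pow_add]; exact Submodule.mul_mem_mul hf hg

/-- The degree does not grow under substitution of an affine map. -/
lemma affFun_comp {G' : Type*} [AddCommGroup G'] [Module (ZMod p) G']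
    (A : G' →ₗ[ZMod p] G) (b : G) {d : ℕ} {f : G → ZMod p} (hf : f ∈ affFun p G ^ d) :
    (fun y => f (A y + b)) ∈ affFun p G' ^ d := by
  induction hf using Submodule.pow_induction_on_left' with
  | algebraMap r => 
    rw [pow_zero, Submodule.mem_one]
    exact ⟨r, rfl⟩
  | add x y i hx hy ihx ihy => exact add_mem ihx ihy
  | mem_mul m hm i x hx ih =>
    obtain ⟨l, r, rfl⟩ := hm
    rw [pow_succ']
    refine Submodule.mul_mem_mul (M := affFun p G') ?_ ih
    exact ⟨l.comp A, l b + r, by ext y; simp [add_assoc]⟩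

/-- `f` and its composition with the projection `x ↦ x - (ℓ x - a) • e` onto the hyperplane
`ℓ = a` agree modulo `(ℓ - a)` times a function of degree one less. -/
lemma affFun_sub_proj (l : Module.Dual (ZMod p) G) (e : G) (a : ZMod p)
    {d : ℕ} {f : G → ZMod p} (hf : f ∈ affFun p G ^ d) :
    ∃ g : G → ZMod p, (d = 0 → g = 0) ∧ (∀ k, d = k + 1 → g ∈ affFun p G ^ k) ∧
      ∀ x, f x - f (x - (l x - a) • e) = (l x - a) * g x := by
  induction hf using Submodule.pow_induction_on_left' with
  | algebraMap r => exact ⟨0, by simp, by simp, by simp⟩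
  | add x y i hx hy ihx ihy =>
    obtain ⟨g, h1, h2, h3⟩ := ihx
    obtain ⟨g', h1', h2', h3'⟩ := ihy
    refine ⟨g + g', fun h => by rw [h1 h, h1' h, add_zero],
      fun k h => add_mem (h2 k h) (h2' k h), fun z => ?_⟩
    simp only [Pi.add_apply]
    linear_combination h3 z + h3' z
  | mem_mul m hm i x hx ih =>
    obtain ⟨g, h1, h2, h3⟩ := ih
    obtain ⟨l', r, rfl⟩ := hm
    refine ⟨(fun y => l' y + r) * g + (l' e) • (fun y => x (y - (l y - a) • e)),
      by simp, ?_, ?_⟩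
    · intro k hk
      obtain rfl : i = k := by omega
      refine add_mem ?_ (Submodule.smul_mem _ _ ?_)
      · rcases i with _ | i
        · rw [h1 rfl]; simp
        · rw [pow_succ']
          exact Submodule.mul_mem_mul (affFun_intro l' r) (h2 i rfl)
      · have := affFun_comp (LinearMap.id - l.smulRight e) (a • e) hx
        convert this using 3 with y
        simp [sub_smul]; abel
    · intro z
      simp only [Pi.mul_apply, Pi.add_apply, Pi.smul_apply, smul_eq_mul, map_sub, map_smul]
      linear_combination (l' z + r) * h3 z

variable [Fact p.Prime]

lemma affFun_factor (l : Module.Dual (ZMod p) G) (e : G) (he : l e = 1) (a : ZMod p)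
    {d : ℕ} {f : G → ZMod p} (hf : f ∈ affFun p G ^ d) (h0 : f ≠ 0)
    (hv : ∀ x, l x = a → f x = 0) :
    ∃ k, d = k + 1 ∧ ∃ g ∈ affFun p G ^ k, ∀ x, f x = (l x - a) * g x := by
  obtain ⟨g, h1, h2, h3⟩ := affFun_sub_proj l e a hf
  have key : ∀ x, f x = (l x - a) * g x := fun x => by
    rw [← h3, hv (x - (l x - a) • e) (by simp [he]), sub_zero]
  rcases d with _ | k
  · refine absurd (funext fun x => ?_) h0
    rw [key, h1 rfl]; simp
  · exact ⟨k, rfl, g, h2 k rfl, key⟩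

lemma affFun_factor_finset (l : Module.Dual (ZMod p) G) (e : G) (he : l e = 1)
    {d : ℕ} {f : G → ZMod p} (hf : f ∈ affFun p G ^ d) (h0 : f ≠ 0)
    (S : Finset (ZMod p)) (hv : ∀ x, l x ∈ S → f x = 0) :
    ∃ k, d = k + S.card ∧ ∃ g ∈ affFun p G ^ k, ∀ x, f x = (∏ a ∈ S, (l x - a)) * g x := by
  induction S using Finset.induction_on with
  | empty => exact ⟨d, by simp, f, hf, by simp⟩
  | insert a S ha ih =>
    obtain ⟨k, hk, g, hg, hfg⟩ := ih fun x hx => hv x (Finset.mem_insert_of_mem hx)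
    have hg0 : g ≠ 0 := by
      rintro rfl
      exact h0 (funext fun x => by simp [hfg x])
    obtain ⟨k', rfl, g', hg', hgg⟩ := affFun_factor l e he a hg hg0 fun x hx => by
      have h1 := hv x (by simp [hx])
      rw [hfg x, mul_eq_zero, Finset.prod_eq_zero_iff] at h1
      rcases h1 with ⟨b, hb, hb'⟩ | h1
      · rw [sub_eq_zero, hx] at hb'
        exact absurd (hb' ▸ hb) ha
      · exact h1
    refine ⟨k', by rw [hk, Finset.card_insert_of_notMem ha]; ring, g', hg', fun x => ?_⟩
    rw [hfg x, hgg x, Finset.prod_insert ha]; ring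

/-- Bernoulli's inequality in integer form. -/
lemma succ_pow_le_succ_pow {j M : ℕ} (h : j ≤ M) : (M + 1) ^ j ≤ (j + 1) ^ M := by
  rcases Nat.eq_zero_or_pos j with rfl | hj
  · simp
  have hj' : (0 : ℝ) < j := by exact_mod_cast hj
  have h1 : (1 : ℝ) ≤ (M : ℝ) / j := by
    rw [le_div_iff₀ hj', one_mul]; exact_mod_cast h
  have h2 := one_add_mul_self_le_rpow_one_add (s := (j : ℝ)) (by linarith) h1
  rw [div_mul_cancel₀ _ hj'.ne'] at h2
  have h3 := pow_le_pow_left₀ (by positivity) h2 j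
  rw [← Real.rpow_natCast ((1 + (j : ℝ)) ^ ((M : ℝ) / j)) j, ← Real.rpow_mul (by positivity),
    div_mul_cancel₀ _ hj'.ne', Real.rpow_natCast] at h3
  rw [add_comm M, add_comm j]
  exact_mod_cast h3

/-- A nonzero function of degree at most `d` on `𝔽_p ^ D` has at least `p ^ (D - d / (p - 1))`
nonzeros. The induction slices `G` by the level sets of a functional; a vanishing slice
divides out a linear factor and lowers the degree. -/
theorem affFun_weight (D : ℕ) : ∀ (G : Type*) [AddCommGroup G] [Module (ZMod p) G] [Fintype G]
    (_ : Module.finrank (ZMod p) G = D) (d : ℕ) (f : G → ZMod p)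
    (_ : f ∈ affFun p G ^ d) (_ : f ≠ 0),
    p ^ (D * (p - 1)) ≤ (Finset.univ.filter fun x => f x ≠ 0).card ^ (p - 1) * p ^ d := by
  have hp : p.Prime := Fact.out
  induction D with
  | zero =>
    intro G _ _ _ _ d f _ h0
    obtain ⟨x, hx⟩ := Function.ne_iff.mp h0
    have : 0 < (Finset.univ.filter fun x => f x ≠ 0).card :=
      Finset.card_pos.mpr ⟨x, by simpa using hx⟩
    rw [zero_mul, pow_zero]
    exact Nat.mul_pos (pow_pos this _) (pow_pos hp.pos _)
  | succ D ih =>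
    intro G _ _ _ hG d f hf h0
    have : Module.Finite (ZMod p) G := Module.Finite.of_finite
    have : Nontrivial G := Module.nontrivial_of_finrank_pos (R := ZMod p) (by omega)
    obtain ⟨v, hv⟩ := exists_ne (0 : G)
    obtain ⟨l, hl⟩ : ∃ l : Module.Dual (ZMod p) G, l v ≠ 0 := by
      by_contra! h
      exact hv ((Module.forall_dual_apply_eq_zero_iff (ZMod p) v).mp h)
    obtain ⟨e, he⟩ : ∃ e, l e = 1 := ⟨(l v)⁻¹ • v, by simp [hl]⟩
    have hker : Module.finrank (ZMod p) (LinearMap.ker l) = D := by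
      have h1 := LinearMap.finrank_range_add_finrank_ker l
      have h2 : LinearMap.range l = ⊤ := LinearMap.range_eq_top.mpr fun a => ⟨a • e, by simp [he]⟩
      rw [h2, finrank_top, Module.finrank_self, hG] at h1
      omega
    set S : Finset (ZMod p) := Finset.univ.filter fun a => ∀ x, l x = a → f x = 0 with hS
    obtain ⟨k, hk, g, hg, hfg⟩ := affFun_factor_finset l e he hf h0 S
      fun x hx => (Finset.mem_filter.mp hx).2 x rfl
    obtain ⟨x₀, hx₀⟩ := Function.ne_iff.mp h0
    have hne : (Sᶜ : Finset (ZMod p)).Nonempty :=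
      ⟨l x₀, by simp only [hS, Finset.mem_compl, Finset.mem_filter, not_and, not_forall]
                exact fun _ => ⟨x₀, rfl, hx₀⟩⟩
    set w : ZMod p → ℕ := fun a => (Finset.univ.filter fun x => f x ≠ 0 ∧ l x = a).card with hw
    have hslice : ∀ a ∈ Sᶜ, p ^ (D * (p - 1)) ≤ w a ^ (p - 1) * p ^ k := by
      intro a ha
      have hprod : (∏ b ∈ S, (a - b)) ≠ 0 := by
        rw [Finset.prod_ne_zero_iff]
        intro b hb h
        rw [sub_eq_zero] at h
        exact Finset.mem_compl.mp ha (h ▸ hb)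
      have hlk : ∀ y : LinearMap.ker l, l ((y : G) + a • e) = a := fun y => by
        have := LinearMap.mem_ker.mp y.2
        simp [he, this]
      refine (ih (LinearMap.ker l) hker k (fun y => g ((LinearMap.ker l).subtype y + a • e))
        (affFun_comp _ _ hg) ?_).trans ?_
      · simp only [hS, Finset.mem_compl, Finset.mem_filter, not_and, not_forall,
          Finset.mem_univ, true_implies] at ha
        obtain ⟨x, hx, hfx⟩ := ha
        rw [Function.ne_iff]
        refine ⟨⟨x - a • e, by simp [he, hx]⟩, ?_⟩
        rw [hfg] at hfx
        simpa using right_ne_zero_of_mul hfx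
      · refine Nat.mul_le_mul_right _ (Nat.pow_le_pow_left ?_ _)
        refine Finset.card_le_card_of_injOn (fun y => (y : G) + a • e) ?_ ?_
        · intro y hy
          simp only [Finset.coe_filter, Finset.mem_univ, true_and, Set.mem_ofPred_eq] at hy ⊢
          refine ⟨?_, hlk y⟩
          rw [hfg, hlk]
          exact mul_ne_zero hprod hy
        · intro y _ y' _ h
          exact Subtype.ext (add_right_cancel h)
    have hsum : (Finset.univ.filter fun x => f x ≠ 0).card = ∑ a, w a := by
      rw [Finset.card_eq_sum_card_fiberwise (f := l) (t := Finset.univ) (by simp)]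
      simp [hw, Finset.filter_filter]
    obtain ⟨a₀, ha₀, hmin⟩ := Finset.exists_min_image Sᶜ w hne
    have hcard : (Sᶜ : Finset (ZMod p)).card = p - S.card := by
      rw [Finset.card_compl, ZMod.card]
    have hpos := Finset.card_pos.mpr hne
    have hge : (p - S.card) * w a₀ ≤ (Finset.univ.filter fun x => f x ≠ 0).card := by
      rw [hsum, ← hcard, ← smul_eq_mul]
      exact (Finset.card_nsmul_le_sum _ _ _ hmin).trans
        (Finset.sum_le_sum_of_subset (Finset.subset_univ _))
    have hb : p ^ (p - 1 - S.card) ≤ (p - S.card) ^ (p - 1) := by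
      have := succ_pow_le_succ_pow (j := p - 1 - S.card) (M := p - 1) (by omega)
      rwa [show p - 1 + 1 = p by omega, show p - 1 - S.card + 1 = p - S.card by omega] at this
    calc p ^ ((D + 1) * (p - 1))
        = p ^ (D * (p - 1)) * (p ^ (p - 1 - S.card) * p ^ S.card) := by
          rw [← pow_add, ← pow_add]; congr 1; rw [add_mul]; omega
      _ ≤ (w a₀ ^ (p - 1) * p ^ k) * ((p - S.card) ^ (p - 1) * p ^ S.card) :=
          Nat.mul_le_mul (hslice a₀ ha₀) (Nat.mul_le_mul_right _ hb)
      _ = ((p - S.card) * w a₀) ^ (p - 1) * p ^ d := by rw [hk, pow_add, mul_pow]; ring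
      _ ≤ _ := Nat.mul_le_mul_right _ (Nat.pow_le_pow_left hge _)

lemma affFun_pow_mem {f : G → ZMod p} (hf : f ∈ affFun p G) (d : ℕ) : f ^ d ∈ affFun p G ^ d :=
  Submodule.pow_mem_pow _ hf d

lemma affFun_pow_sub_pow (l : Module.Dual (ZMod p) G) (r r' : ZMod p) (d : ℕ) :
    (fun x => l x + r) ^ d - (fun x => l x + r') ^ d ∈ affFun p G ^ (d - 1) := by
  rw [← geom_sum₂_mul]
  have h : (fun x => l x + r) - (fun x => l x + r') = (r - r') • (1 : G → ZMod p) := by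
    ext x; simp
  rw [h, mul_smul_comm, mul_one]
  refine Submodule.smul_mem _ _ (Submodule.sum_mem _ fun i hi => ?_)
  have hi' := Finset.mem_range.mp hi
  have := affFun_mul (affFun_pow_mem (affFun_intro l r) i)
    (affFun_pow_mem (affFun_intro l r') (d - 1 - i))
  rwa [show i + (d - 1 - i) = d - 1 by omega] at this

/-- The indicator of the flat cut out by `l i + r i = 0`, `i ∈ s`, written as a polynomial by means
of Fermat's little theorem. -/
def flatPoly {κ : Type*} (l : κ → Module.Dual (ZMod p) G) (s : Finset κ) (r : κ → ZMod p) :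
    G → ZMod p :=
  ∏ i ∈ s, (1 - (fun x => l i x + r i) ^ (p - 1))


lemma flatPoly_factor (l : Module.Dual (ZMod p) G) (r : ZMod p) :
    (1 - (fun x => l x + r) ^ (p - 1)) ∈ affFun p G ^ (p - 1) :=
  sub_mem (affFun_mono (Nat.zero_le _) (by rw [pow_zero]; exact Submodule.one_le.mp le_rfl))
    (Submodule.pow_mem_pow _ (affFun_intro l r) _)

lemma flatPoly_mem {κ : Type*} (l : κ → Module.Dual (ZMod p) G) (s : Finset κ)
    (r : κ → ZMod p) : flatPoly l s r ∈ affFun p G ^ ((p - 1) * s.card) := by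
  induction s using Finset.induction_on with
  | empty => simp only [flatPoly, Finset.prod_empty, Finset.card_empty, mul_zero, pow_zero]
             exact Submodule.one_le.mp le_rfl
  | insert a s ha ih =>
    rw [Finset.card_insert_of_notMem ha, flatPoly, Finset.prod_insert ha, mul_add, mul_one,
      add_comm]
    exact affFun_mul (flatPoly_factor _ _) ih

/-- The top-degree part of the indicator of a flat depends only on its direction. -/
lemma flatPoly_sub {κ : Type*} (l : κ → Module.Dual (ZMod p) G) (s : Finset κ)
    (r r' : κ → ZMod p) :
    flatPoly l s r - flatPoly l s r' ∈ affFun p G ^ ((p - 1) * s.card - 1) := by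
  have hp : 2 ≤ p := (Fact.out : p.Prime).two_le
  induction s using Finset.induction_on with
  | empty => simp [flatPoly]
  | insert a s ha ih =>
    have e : ∀ r, flatPoly l (insert a s) r
        = (1 - (fun x => l a x + r a) ^ (p - 1)) * flatPoly l s r := fun r => by
      rw [flatPoly, Finset.prod_insert ha]; rfl
    rw [Finset.card_insert_of_notMem ha, e, e]
    have h : ∀ A B P Q : G → ZMod p, A * P - B * Q = (A - B) * P + B * (P - Q) := by
      intros; ring
    rw [h]
    refine add_mem ?_ ?_
    · have h1 : (1 - (fun x => l a x + r a) ^ (p - 1)) - (1 - (fun x => l a x + r' a) ^ (p - 1))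
          ∈ affFun p G ^ (p - 1 - 1) := by
        rw [sub_sub_sub_cancel_left]; exact affFun_pow_sub_pow _ _ _ _
      refine affFun_mono ?_ (affFun_mul h1 (flatPoly_mem l s r))
      rw [mul_add]; omega
    · rcases s.eq_empty_or_nonempty with rfl | hs
      · simp [flatPoly]
      · have : 0 < (p - 1) * s.card := Nat.mul_pos (by omega) hs.card_pos
        refine affFun_mono ?_ (affFun_mul (flatPoly_factor (l a) (r' a)) ih)
        rw [mul_add]; omega

/-- The indicator function of the coset `x + A`. -/
noncomputable def cosetInd (p : ℕ) (A : AddSubgroup G) (x : G) : G → ZMod p :=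
  fun y => if y - x ∈ A then 1 else 0

lemma exists_functionals [Fintype G] (A : AddSubgroup G) {N c : ℕ}
    (hA : Nat.card A = p ^ N) (hG : Nat.card G = p ^ (N + c)) :
    ∃ l : Fin c → Module.Dual (ZMod p) G, ∀ y, y ∈ A ↔ ∀ i, l i y = 0 := by
  have hp : p.Prime := Fact.out
  set A' : Submodule (ZMod p) G := AddSubgroup.toZModSubmodule p A
  have hmem : ∀ y, y ∈ A' ↔ y ∈ A := fun y => AddSubgroup.mem_toZModSubmodule p
  have hc : Nat.card (G ⧸ A') = p ^ c := by
    have h1 := Submodule.card_eq_card_quotient_mul_card A'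
    have h2 : Nat.card A' = p ^ N := hA
    rw [h2, hG, pow_add] at h1
    exact (Nat.eq_of_mul_eq_mul_left (pow_pos hp.pos N) h1).symm
  have hfin : Module.Finite (ZMod p) (G ⧸ A') := Module.Finite.of_finite
  have hr : Module.finrank (ZMod p) (G ⧸ A') = c := by
    have h1 := Module.natCard_eq_pow_finrank (K := ZMod p) (V := G ⧸ A')
    rw [hc, Nat.card_zmod] at h1
    exact (Nat.pow_right_injective hp.two_le h1).symm
  let B := Module.finBasisOfFinrankEq (ZMod p) (G ⧸ A') hr
  refine ⟨fun i => (B.coord i).comp A'.mkQ, fun y => ?_⟩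
  rw [← hmem, ← Submodule.Quotient.mk_eq_zero, ← B.forall_coord_eq_zero_iff]
  rfl

/-- The indicator of a coset of a subgroup of codimension `c` has degree at most `(p - 1) c`, and
two cosets of the same subgroup have equal parts of that degree. -/
lemma cosetInd_mem_and_sub_mem [Fintype G] (A : AddSubgroup G) {N c : ℕ}
    (hA : Nat.card A = p ^ N) (hG : Nat.card G = p ^ (N + c)) (x : G) :
    cosetInd p A x ∈ affFun p G ^ ((p - 1) * c) ∧
    cosetInd p A x - cosetInd p A 0 ∈ affFun p G ^ ((p - 1) * c - 1) := by
  obtain ⟨l, hl⟩ := exists_functionals A hA hG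
  have hp : 2 ≤ p := (Fact.out : p.Prime).two_le
  have key : ∀ x, cosetInd p A x = flatPoly l Finset.univ (fun i => - l i x) := by
    intro x
    ext y
    simp only [cosetInd, flatPoly, Finset.prod_apply, Pi.sub_apply, Pi.one_apply, Pi.pow_apply]
    split_ifs with h
    · rw [hl] at h
      refine (Finset.prod_eq_one fun i _ => ?_).symm
      have := h i
      rw [map_sub, sub_eq_add_neg] at this
      rw [this, zero_pow (by omega), sub_zero]
    · rw [hl] at h
      push Not at h
      obtain ⟨i, hi⟩ := h
      rw [map_sub, sub_eq_add_neg] at hi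
      refine (Finset.prod_eq_zero (Finset.mem_univ i) ?_).symm
      rw [ZMod.pow_card_sub_one_eq_one hi, sub_self]
  rw [key x, key 0]
  have h1 := flatPoly_mem l Finset.univ (fun i => - l i x)
  have h2 := flatPoly_sub l Finset.univ (fun i => - l i x) (fun i => - l i 0)
  rw [Finset.card_univ, Fintype.card_fin] at h1 h2
  exact ⟨h1, h2⟩

end Degree

/-! ### The coset model -/


section Model

lemma cast_prime_pow_eq_zero {p k : ℕ} (hk : 1 ≤ k) : ((p ^ k : ℕ) : ZMod p) = 0 := by
  rw [Nat.cast_pow, CharP.cast_eq_zero, zero_pow (by omega)]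

/-- The egg in coset form: `G` is the underlying group of the hyperplane at infinity `H`, the
subgroups `E i` are the egg elements and `T i` their tangent spaces, with `s = p ^ a` and
`t = p ^ b`. Since only the `𝔽_p`-structure matters, subgroups replace subspaces over the
larger field. The condition `triple` says that any three egg elements are independent. -/
structure EggModel (p a b : ℕ) {G : Type*} [AddCommGroup G] {ι : Type*}
    (E T : ι → AddSubgroup G) : Prop where
  one_le_a : 1 ≤ a
  one_le_b : 1 ≤ b
  card_G : Nat.card G = p ^ (2 * a + b)
  card_ι : Nat.card ι = p ^ b + 1
  card_E : ∀ i, Nat.card (E i) = p ^ a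
  card_T : ∀ i, Nat.card (T i) = p ^ (a + b)
  le : ∀ i, E i ≤ T i
  disj : ∀ i j, j ≠ i → ∀ x ∈ E j, x ∈ T i → x = 0
  triple : ∀ i j k, i ≠ j → i ≠ k → j ≠ k → ∀ x ∈ E i, ∀ y ∈ E j, ∀ z ∈ E k,
    x + y + z = 0 → z = 0

variable {p a b : ℕ} [Fact p.Prime] {G : Type*} [AddCommGroup G] [Fintype G]
  {ι : Type*} [Fintype ι] {E T : ι → AddSubgroup G}

/-- The points of the model: elements of `G`, cosets of the tangent spaces, and `∞`. -/
abbrev MPt (T : ι → AddSubgroup G) : Type _ := (G ⊕ (Σ i, G ⧸ T i)) ⊕ Unit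

/-- Incidence vector of the line `x + E i` together with the point `x + T i`. -/
noncomputable def lineA (p : ℕ) (E T : ι → AddSubgroup G) (i : ι) (x : G) : MPt T → ZMod p
  | Sum.inl (Sum.inl y) => cosetInd p (E i) x y
  | Sum.inl (Sum.inr u) => if u = ⟨i, (x : G ⧸ T i)⟩ then 1 else 0
  | Sum.inr _ => 0

/-- Incidence vector of the line consisting of all cosets of `T i` and `∞`. -/
noncomputable def lineB (p : ℕ) (T : ι → AddSubgroup G) (i : ι) : MPt T → ZMod p
  | Sum.inl (Sum.inl _) => 0
  | Sum.inl (Sum.inr u) => if u.1 = i then 1 else 0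
  | Sum.inr _ => 1

/-- The code of the model. -/
noncomputable def modelCode (p : ℕ) (E T : ι → AddSubgroup G) :
    Submodule (ZMod p) (MPt T → ZMod p) :=
  Submodule.span (ZMod p) ({v | ∃ i x, v = lineA p E T i x} ∪ {v | ∃ i, v = lineB p T i})

namespace EggModel

variable (hM : EggModel p a b E T)
include hM

lemma card_quot (i : ι) : Nat.card (G ⧸ T i) = p ^ a := by
  have h := AddSubgroup.card_eq_card_quotient_mul_card_addSubgroup (T i)
  rw [hM.card_G, hM.card_T, show 2 * a + b = a + (a + b) by ring, pow_add] at h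
  exact (Nat.eq_of_mul_eq_mul_right (pow_pos (Fact.out : p.Prime).pos _) h).symm

/-- `G = E j ⊕ T i` for `j ≠ i`. -/
lemma exists_unique_decomp {i j : ι} (hij : j ≠ i) (d : G) : ∃! e : E j, d + e ∈ T i := by
  have hbij : Function.Bijective (fun z : E j × T i => (z.2 : G) - z.1) := by
    refine (Nat.bijective_iff_injective_and_card _).mpr ⟨?_, ?_⟩
    · rintro ⟨e, t⟩ ⟨e', t'⟩ h
      simp only at h
      have h1 : (e : G) - e' = t - t' := by
        rw [sub_eq_sub_iff_add_eq_add] at h ⊢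
        rw [h, add_comm]
      have h2 := hM.disj i j hij _ (sub_mem e.2 e'.2) (h1 ▸ sub_mem t.2 t'.2)
      exact Prod.ext (Subtype.ext (sub_eq_zero.mp h2)) (Subtype.ext (sub_eq_zero.mp (h1 ▸ h2)))
    · rw [Nat.card_prod, hM.card_E, hM.card_T, hM.card_G, ← pow_add]; congr 1; ring
  obtain ⟨⟨e, t⟩, h⟩ := hbij.2 d
  simp only at h
  refine ⟨e, by rw [← h]; simp, fun e' he' => ?_⟩
  have := @hbij.1 (e', ⟨d + e', he'⟩) (e, t) (by simp [h])
  exact congrArg Prod.fst this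

/-- The quadrangle axiom for an affine point and an affine line in direction `E i` which do not
lie in a common coset of `T i`: if `d` is the difference of the point and a point of the line,
exactly one `j ≠ i` has `d ∈ E i + E j`. Uniqueness is the general position of
triples in the egg, existence follows by counting. -/
lemma exists_unique_join {i : ι} {d : G} (hd : d ∉ T i) :
    ∃! j : ι, j ≠ i ∧ ∃ e ∈ E j, d + e ∈ E i := by
  have hp : p.Prime := Fact.out
  let Y := (Σ j : {j : ι // j ≠ i}, {y : E j.1 // y ≠ 0}) × E i
  have hY0 : ∀ z : Y, (z.2 : G) - z.1.2.1 ∉ T i := by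
    rintro ⟨⟨j, y⟩, x⟩ h
    have h1 : (y.1 : G) ∈ T i := by
      have := sub_mem (hM.le i x.2) h
      simpa using this
    exact y.2 (Subtype.ext (hM.disj i j j.2 _ y.1.2 h1))
  -- general position of `E i`, `E j`, `E k` forces the joining direction to be unique
  have huniq : ∀ j k, j ≠ i → k ≠ i → ∀ y ∈ E j, ∀ z ∈ E k, ∀ c, c ∉ T i → c + y ∈ E i →
      c + z ∈ E i → j = k := by
    intro j k hj hk y hy z hz c hc h1 h2
    by_contra hjk
    have h3 := hM.triple i j k hj.symm hk.symm hjk _ (sub_mem h2 h1) y hy (-z) (neg_mem hz)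
      (by abel)
    rw [neg_eq_zero] at h3
    rw [h3, add_zero] at h2
    exact hc (hM.le i h2)
  let φ : Y → {c : G // c ∉ T i} := fun z => ⟨_, hY0 z⟩
  have hφ : Function.Injective φ := by
    rintro ⟨⟨⟨j, hj⟩, y⟩, x⟩ ⟨⟨⟨k, hk⟩, z⟩, x'⟩ h
    have h' : (x : G) - y.1 = x' - z.1 := congrArg Subtype.val h
    have hjk : j = k := huniq j k hj hk _ y.1.2 _ z.1.2 _
      (hY0 ⟨⟨⟨j, hj⟩, y⟩, x⟩) (by simp) (by simp only [h']; simp)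
    subst hjk
    have h1 : (x : G) - x' = y.1 - z.1 := by
      rw [sub_eq_sub_iff_add_eq_add] at h' ⊢
      rw [h']; abel
    have h2 := hM.disj i j hj _ (sub_mem y.1.2 z.1.2) (h1 ▸ hM.le i (sub_mem x.2 x'.2))
    have h3 : y = z := Subtype.ext (Subtype.ext (sub_eq_zero.mp h2))
    have h4 : x = x' := Subtype.ext (sub_eq_zero.mp (h1 ▸ h2))
    rw [h3, h4]
  have hcard : Nat.card Y = Nat.card {c : G // c ∉ T i} := by
    have e1 : ∀ j : ι, Nat.card {y : E j // y ≠ 0} = p ^ a - 1 := fun j => by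
      have := Fintype.card_subtype_compl (fun y : E j => y = 0)
      rw [Fintype.card_subtype_eq, ← Nat.card_eq_fintype_card, ← Nat.card_eq_fintype_card,
        hM.card_E] at this
      exact this
    have e2 : Nat.card {j : ι // j ≠ i} = p ^ b := by
      have := Fintype.card_subtype_compl (fun j : ι => j = i)
      rw [Fintype.card_subtype_eq, ← Nat.card_eq_fintype_card, ← Nat.card_eq_fintype_card,
        hM.card_ι] at this
      exact this
    have e3 : Nat.card {c : G // c ∉ T i} = p ^ (2 * a + b) - p ^ (a + b) := by
      have := Fintype.card_subtype_compl (fun c : G => c ∈ T i)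
      rw [← Nat.card_eq_fintype_card, ← Nat.card_eq_fintype_card, ← Nat.card_eq_fintype_card,
        hM.card_G] at this
      rw [this]; congr 1; exact hM.card_T i
    rw [e3, Nat.card_prod, Nat.card_sigma, hM.card_E]
    simp only [e1]
    rw [Finset.sum_const, Finset.card_univ, ← Nat.card_eq_fintype_card, e2, smul_eq_mul,
      Nat.mul_sub, Nat.sub_mul, mul_one]
    congr 1 <;> ring
  obtain ⟨⟨⟨⟨j, hj⟩, y⟩, x⟩, h⟩ := ((Nat.bijective_iff_injective_and_card φ).mpr ⟨hφ, hcard⟩).2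
    ⟨d, hd⟩
  have h' : (x : G) - y.1 = d := congrArg Subtype.val h
  refine ⟨j, ⟨hj, y.1, y.1.2, by rw [← h']; simp⟩, ?_⟩
  rintro k ⟨hk, z, hz, hz'⟩
  exact huniq k j hk hj z hz _ y.1.2 d hd hz' (by rw [← h']; simp)

/-- Let `d` be the difference of an affine point `x` and a point of an affine line in direction
`E i`. Modulo `p`, the intersection sizes of that line with the cosets `x + E j`, plus one if the
line lies in `x + T i`, add up to one. -/
lemma sum_join (i : ι) (d : G) :
    (∑ j, ∑ e : E j, (if d + (e : G) ∈ E i then (1 : ZMod p) else 0))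
      + (if d ∈ T i then 1 else 0) = 1 := by
  have h1 : ∀ j, j ≠ i → (∑ e : E j, (if d + (e : G) ∈ E i then (1 : ZMod p) else 0))
      = if ∃ e ∈ E j, d + e ∈ E i then 1 else 0 := by
    intro j hj
    split_ifs with h
    · obtain ⟨e, he, hde⟩ := h
      rw [Finset.sum_eq_single ⟨e, he⟩]
      · simp [hde]
      · intro e' _ hne
        rw [if_neg]
        intro h2
        refine hne ?_
        obtain ⟨_, _, hu⟩ := hM.exists_unique_decomp hj d
        rw [hu e' (hM.le i h2), hu ⟨e, he⟩ (hM.le i hde)]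
      · simp
    · refine Finset.sum_eq_zero fun e _ => if_neg fun h2 => h ⟨e, e.2, h2⟩
  have h2 : (∑ e : E i, (if d + (e : G) ∈ E i then (1 : ZMod p) else 0)) = 0 := by
    simp only [add_mem_cancel_right (SetLike.coe_mem _)]
    rw [Finset.sum_const, Finset.card_univ, ← Nat.card_eq_fintype_card, hM.card_E, nsmul_eq_mul,
      cast_prime_pow_eq_zero hM.one_le_a, zero_mul]
  rw [← Finset.add_sum_erase _ _ (Finset.mem_univ i), h2, zero_add,
    Finset.sum_congr rfl (fun j hj => h1 j (Finset.ne_of_mem_erase hj))]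
  split_ifs with hT
  · rw [Finset.sum_congr rfl (g := fun _ => if d ∈ E i then (1 : ZMod p) else 0)]
    · rw [Finset.sum_const, Finset.card_erase_of_mem (Finset.mem_univ i), Finset.card_univ,
        ← Nat.card_eq_fintype_card, hM.card_ι, Nat.add_sub_cancel, nsmul_eq_mul,
        cast_prime_pow_eq_zero hM.one_le_b, zero_mul, zero_add]
    · intro j hj
      congr 1
      refine propext ⟨?_, fun h => ⟨0, zero_mem _, by simpa using h⟩⟩
      rintro ⟨e, he, h⟩
      have h3 : e ∈ T i := by simpa using sub_mem (hM.le i h) hT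
      have := hM.disj i j (Finset.ne_of_mem_erase hj) e he h3
      simpa [this] using h
  · obtain ⟨j, ⟨hj, hj'⟩, hu⟩ := hM.exists_unique_join hT
    rw [add_zero, Finset.sum_eq_single j]
    · rw [if_pos hj']
    · intro k hk hkj
      exact if_neg fun h => hkj (hu k ⟨Finset.ne_of_mem_erase hk, h⟩)
    · intro h
      exact absurd (Finset.mem_erase.mpr ⟨hj, Finset.mem_univ _⟩) h

end EggModel
end Model

/-! ### Linear relations satisfied by the codewords -/

section Model2
variable {p a b : ℕ} [Fact p.Prime] {G : Type*} [AddCommGroup G] [Fintype G]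
  {ι : Type*} [Fintype ι] {E T : ι → AddSubgroup G}

namespace EggModel

variable (hM : EggModel p a b E T)
include hM

/-- The dual relations: the sum of a codeword over all points collinear with a given point is
the same for every point. The first relation is for an affine point `x` (up to a multiple
`p ^ b` of the value at `x`), the second for the point `x + T i`. -/
lemma dual_relations {c : MPt T → ZMod p} (hc : c ∈ modelCode p E T) :
    ∃ σ : ZMod p,
      (∀ x : G, (∑ j, ∑ e : E j, c (Sum.inl (Sum.inl (x + e))))
        + ∑ j, c (Sum.inl (Sum.inr ⟨j, (x : G ⧸ T j)⟩)) = σ) ∧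
      (∀ i (x : G), (∑ t : T i, c (Sum.inl (Sum.inl (x + t))))
        + ∑ u : G ⧸ T i, c (Sum.inl (Sum.inr ⟨i, u⟩)) + c (Sum.inr ()) = σ) := by
  induction hc using Submodule.span_induction with
  | zero => exact ⟨0, by simp, by simp⟩
  | add c c' _ _ h h' =>
    obtain ⟨σ, h1, h2⟩ := h
    obtain ⟨σ', h1', h2'⟩ := h'
    refine ⟨σ + σ', fun x => ?_, fun i x => ?_⟩
    · rw [← h1 x, ← h1' x]
      simp only [Pi.add_apply, Finset.sum_add_distrib]; ring
    · rw [← h2 i x, ← h2' i x]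
      simp only [Pi.add_apply, Finset.sum_add_distrib]; ring
  | smul r c _ h =>
    obtain ⟨σ, h1, h2⟩ := h
    refine ⟨r * σ, fun x => ?_, fun i x => ?_⟩
    · rw [← h1 x]
      simp only [Pi.smul_apply, smul_eq_mul, ← Finset.mul_sum]; ring
    · rw [← h2 i x]
      simp only [Pi.smul_apply, smul_eq_mul, ← Finset.mul_sum]; ring
  | mem c hc =>
    refine ⟨1, ?_⟩
    rcases hc with ⟨i, y, rfl⟩ | ⟨i, rfl⟩
    · refine ⟨fun x => ?_, fun j x => ?_⟩
      · simp only [lineA, cosetInd]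
        refine Eq.trans ?_ (hM.sum_join i (x - y))
        congr 1
        · refine Finset.sum_congr rfl fun j _ => Finset.sum_congr rfl fun e _ => ?_
          rw [sub_add_eq_add_sub]
        · rw [Finset.sum_eq_single i]
          · congr 1
            rw [Sigma.mk.injEq]
            simp only [heq_eq_eq, true_and]
            rw [QuotientAddGroup.eq_iff_sub_mem]
          · intro j _ hj
            exact if_neg fun h => hj (congrArg Sigma.fst h)
          · simp
      · simp only [lineA, cosetInd, add_zero]
        by_cases hij : j = i
        · subst hij
          have h1 : ∑ t : T j, (if x + (t : G) - y ∈ E j then (1 : ZMod p) else 0) = 0 := by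
            by_cases h : x - y ∈ T j
            · have h2 : (∑ t : T j, (if x + (t : G) - y ∈ E j then (1 : ZMod p) else 0))
                  = ∑ s : E j, 1 := by
                rw [← Finset.sum_filter]
                refine (Finset.sum_bij
                  (fun s _ => ⟨(s : G) - (x - y), sub_mem (hM.le j s.2) h⟩) ?_ ?_ ?_ ?_).symm
                · intro s _
                  simp only [Finset.mem_filter, Finset.mem_univ, true_and]
                  convert s.2 using 1; abel
                · intro s _ s' _ hs
                  exact Subtype.ext (sub_left_injective (congrArg Subtype.val hs))
                · intro t ht
                  refine ⟨⟨_, (Finset.mem_filter.mp ht).2⟩, Finset.mem_univ _, Subtype.ext ?_⟩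
                  simp only; abel
                · simp
              rw [h2, Finset.sum_const, Finset.card_univ, ← Nat.card_eq_fintype_card, hM.card_E,
                nsmul_eq_mul, cast_prime_pow_eq_zero hM.one_le_a, zero_mul]
            · refine Finset.sum_eq_zero fun t _ => if_neg fun h2 => h ?_
              have := sub_mem (hM.le j h2) t.2
              convert this using 1; abel
          rw [h1, zero_add, Finset.sum_eq_single ((y : G) : G ⧸ T j)]
          · simp
          · intro u _ hu
            refine if_neg fun h => hu ?_
            simpa using h
          · simp
        · have h1 : ∑ u : G ⧸ T j, (if (⟨j, u⟩ : Σ j, G ⧸ T j) = ⟨i, (y : G ⧸ T i)⟩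
              then (1 : ZMod p) else 0) = 0 :=
            Finset.sum_eq_zero fun u _ => if_neg fun h => hij (congrArg Sigma.fst h)
          rw [h1, add_zero]
          -- `E i ⊕ T j = G` gives the unique point of `y + E i` on `x + T j`
          obtain ⟨e, he, hu⟩ := hM.exists_unique_decomp (i := j) (j := i) (Ne.symm hij) (y - x)
          rw [Finset.sum_eq_single ⟨_, he⟩]
          · rw [if_pos]
            convert e.2 using 1; simp only; abel
          · intro t _ ht
            refine if_neg fun h => ht (Subtype.ext ?_)
            have h2 := hu ⟨_, h⟩ (by
              simp only
              convert t.2 using 1; abel)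
            have h3 : x + (t : G) - y = e := congrArg Subtype.val h2
            simp only
            rw [← h3]; abel
          · simp
    · refine ⟨fun x => ?_, fun j x => ?_⟩
      · simp [lineB]
      · simp only [lineB, Finset.sum_const_zero, zero_add]
        split_ifs
        · rw [Finset.sum_const, Finset.card_univ, ← Nat.card_eq_fintype_card, hM.card_quot,
            nsmul_eq_mul, cast_prime_pow_eq_zero hM.one_le_a, zero_mul, zero_add]
        · simp

variable [Module (ZMod p) G]

/-- The affine part of a codeword has degree at most `(p - 1) (a + b)`, and its part of that
degree is governed by the sums of the codeword over the cosets of each `T i`. -/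
lemma degree_relations {c : MPt T → ZMod p} (hc : c ∈ modelCode p E T) :
    (fun y => c (Sum.inl (Sum.inl y))) ∈ affFun p G ^ ((p - 1) * (a + b)) ∧
    (fun y => c (Sum.inl (Sum.inl y))) - ∑ i, (∑ u : G ⧸ T i, c (Sum.inl (Sum.inr ⟨i, u⟩))) •
      cosetInd p (E i) 0 ∈ affFun p G ^ ((p - 1) * (a + b) - 1) := by
  induction hc using Submodule.span_induction with
  | zero => 
    refine ⟨zero_mem _, ?_⟩
    convert zero_mem (affFun p G ^ _) using 1
    simp; rfl
  | add c c' _ _ h h' =>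
    refine ⟨add_mem h.1 h'.1, ?_⟩
    convert add_mem h.2 h'.2 using 1
    simp only [Pi.add_apply, Finset.sum_add_distrib, add_smul]
    exact add_sub_add_comm (fun y => c (Sum.inl (Sum.inl y)))
      (fun y => c' (Sum.inl (Sum.inl y))) _ _
  | smul r c _ h =>
    refine ⟨Submodule.smul_mem _ r h.1, ?_⟩
    convert Submodule.smul_mem _ r h.2 using 1
    simp only [Pi.smul_apply, ← Finset.smul_sum, smul_sub, smul_assoc]
    rfl
  | mem c hc =>
    rcases hc with ⟨i, x, rfl⟩ | ⟨i, rfl⟩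
    · have h := cosetInd_mem_and_sub_mem (c := a + b) (E i) (hM.card_E i)
        (by rw [hM.card_G]; congr 1; ring) x
      refine ⟨h.1, ?_⟩
      convert h.2 using 1
      congr 1
      rw [Finset.sum_eq_single i]
      · rw [Finset.sum_eq_single ((x : G) : G ⧸ T i)]
        · simp [lineA]
        · intro u _ hu
          refine if_neg fun h => hu ?_
          simpa using h
        · simp
      · intro j _ hj
        rw [Finset.sum_eq_zero, zero_smul]
        exact fun u _ => if_neg fun h => hj (congrArg Sigma.fst h)
      · simp
    · refine ⟨zero_mem _, ?_⟩
      convert zero_mem (affFun p G ^ _) using 1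
      rw [Finset.sum_eq_zero]
      · rw [sub_zero]; rfl
      · intro j _
        simp only [lineB]
        split_ifs
        · rw [Finset.sum_const, Finset.card_univ, ← Nat.card_eq_fintype_card, hM.card_quot,
            nsmul_eq_mul, cast_prime_pow_eq_zero hM.one_le_a, zero_mul, zero_smul]
        · simp

end EggModel
end Model2

/-! ### The minimum weight in the model -/

section Model3
variable {p a b : ℕ} [Fact p.Prime] {G : Type*} [AddCommGroup G] [Fintype G]
  {ι : Type*} [Fintype ι] {E T : ι → AddSubgroup G}

lemma card_support_eq (c : MPt T → ZMod p) :
    Nat.card {P // c P ≠ 0} = (Finset.univ.filter fun y => c (Sum.inl (Sum.inl y)) ≠ 0).card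
      + (Finset.univ.filter fun w => c (Sum.inl (Sum.inr w)) ≠ 0).card
      + if c (Sum.inr ()) ≠ 0 then 1 else 0 := by
  rw [Nat.card_congr (Equiv.subtypeSum (p := fun P => c P ≠ 0)), Nat.card_sum,
    Nat.card_congr (Equiv.subtypeSum (p := fun P => c (Sum.inl P) ≠ 0)), Nat.card_sum,
    Nat.card_eq_fintype_card, Nat.card_eq_fintype_card, Nat.card_eq_fintype_card,
    Fintype.card_subtype, Fintype.card_subtype, Fintype.card_subtype]
  congr 1
  split_ifs with h
  · rw [Finset.filter_true_of_mem (fun _ _ => h)]; simp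
  · rw [Finset.filter_false_of_mem (fun _ _ => h)]; simp

namespace EggModel

variable (hM : EggModel p a b E T)
include hM

lemma card_lineB (i : ι) : Nat.card {P // lineB p T i P ≠ 0} = p ^ a + 1 := by
  rw [card_support_eq, ← hM.card_quot i, Nat.card_eq_fintype_card, ← Finset.card_univ]
  have h : (Finset.univ.filter fun w : Σ j, G ⧸ T j => lineB p T i (Sum.inl (Sum.inr w)) ≠ 0).card
      = (Finset.univ : Finset (G ⧸ T i)).card := by
    refine (Finset.card_bij (fun u _ => ⟨i, u⟩) ?_ ?_ ?_).symm
    · intro u _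
      simp [lineB]
    · intro u _ v _ h
      simpa using h
    · rintro ⟨j, u⟩ hu
      have hj : j = i := by simpa [lineB] using hu
      subst hj
      exact ⟨u, Finset.mem_univ _, rfl⟩
  rw [h]
  simp [lineB]

lemma card_fiber (w : Σ i, G ⧸ T i) :
    (Finset.univ.filter fun x : G => (⟨w.1, (x : G ⧸ T w.1)⟩ : Σ i, G ⧸ T i) = w).card
      = p ^ (a + b) := by
  obtain ⟨i, u⟩ := w
  obtain ⟨y, rfl⟩ := QuotientAddGroup.mk_surjective u
  rw [← hM.card_T i, Nat.card_eq_fintype_card, ← Finset.card_univ]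
  refine (Finset.card_bij (fun (t : T i) _ => y + (t : G)) ?_ ?_ ?_).symm
  · intro t _
    simp
  · intro t _ t' _ h
    exact Subtype.ext (add_left_cancel h)
  · intro x hx
    have hx' : ((y : G) : G ⧸ T i) = x := by simpa [eq_comm] using hx
    rw [QuotientAddGroup.eq] at hx'
    exact ⟨⟨_, hx'⟩, Finset.mem_univ _, by simp⟩

/-- Cosets of `T i` and `T j`, `i ≠ j`, meet in at most `p ^ b` elements: the translates of the
intersection by the elements of `E j` are pairwise disjoint and stay in the coset of `T j`. -/
lemma card_inter_le {i j : ι} (hij : i ≠ j) (u : G ⧸ T i) (v : G ⧸ T j) :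
    (Finset.univ.filter fun x : G => (x : G ⧸ T i) = u ∧ (x : G ⧸ T j) = v).card ≤ p ^ b := by
  have hp : p.Prime := Fact.out
  have h : (Finset.univ.filter fun x : G => (x : G ⧸ T i) = u ∧ (x : G ⧸ T j) = v).card * p ^ a
      ≤ p ^ b * p ^ a := by
    have h1 := hM.card_fiber ⟨j, v⟩
    rw [← pow_add, add_comm b a, ← h1, ← hM.card_E j, Nat.card_eq_fintype_card,
      ← Finset.card_univ, ← Finset.card_product]
    refine Finset.card_le_card_of_injOn (fun z => z.1 + (z.2 : G)) ?_ ?_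
    · rintro ⟨x, e⟩ hx
      simp only [Finset.coe_product, Set.mem_prod, Finset.coe_filter, Finset.mem_univ, true_and,
        Set.mem_ofPred_eq] at hx
      have h2 : (((e : E j) : G) : G ⧸ T j) = 0 :=
        (QuotientAddGroup.eq_zero_iff _).mpr (hM.le j e.2)
      simp [hx.1.2, h2]
    · rintro ⟨x, e⟩ hx ⟨x', e'⟩ hx' h
      simp only [Finset.coe_product, Set.mem_prod, Finset.coe_filter, Finset.mem_univ, true_and,
        Set.mem_ofPred_eq] at hx hx'
      simp only at h
      have h2 : x - x' ∈ T i := by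
        rw [← QuotientAddGroup.eq_iff_sub_mem, hx.1.1, hx'.1.1]
      have h3 : x - x' = e' - e := by
        rw [sub_eq_sub_iff_add_eq_add, h, add_comm]
      have h4 := hM.disj i j hij.symm _ (sub_mem e'.2 e.2) (h3 ▸ h2)
      have h5 : e = e' := Subtype.ext (sub_eq_zero.mp h4).symm
      subst h5
      exact Prod.ext (add_right_cancel h) rfl
  exact Nat.le_of_mul_le_mul_right h (pow_pos hp.pos _)

/-- Codewords vanishing on the affine points. Let `σ` be the constant of the dual relations. If
`σ = 0`, each element of a coset in the support lies on a second coset of the support, and those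
meet the first one in at most `p ^ b` elements. If `σ ≠ 0`, the cosets in the support cover `G`. -/
lemma weight_of_affine_zero {c : MPt T → ZMod p} (hc : c ∈ modelCode p E T) (h0 : c ≠ 0)
    (hf : ∀ y, c (Sum.inl (Sum.inl y)) = 0) : p ^ a + 1 ≤ Nat.card {P // c P ≠ 0} := by
  have hp : p.Prime := Fact.out
  rw [card_support_eq]
  have hA : (Finset.univ.filter fun y => c (Sum.inl (Sum.inl y)) ≠ 0).card = 0 := by
    simp [hf]
  rw [hA, zero_add]
  set S := Finset.univ.filter fun w => c (Sum.inl (Sum.inr w)) ≠ 0 with hS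
  obtain ⟨σ, h1, h2⟩ := hM.dual_relations hc
  simp only [hf, Finset.sum_const_zero, zero_add] at h1 h2
  by_cases hσ : σ = 0
  · subst hσ
    by_cases hne : S.Nonempty
    · obtain ⟨⟨i, u⟩, hw⟩ := hne
      have hwc : c (Sum.inl (Sum.inr ⟨i, u⟩)) ≠ 0 := (Finset.mem_filter.mp hw).2
      -- each element of the coset `u` lies on a second coset of the support
      set F := Finset.univ.filter fun x : G => (x : G ⧸ T i) = u with hF
      have hFc : F.card = p ^ (a + b) := by
        rw [← hM.card_fiber ⟨i, u⟩]; congr 1; ext x; simp [hF]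
      have hcov : F ⊆ (S.filter fun w => w.1 ≠ i).biUnion fun w =>
          Finset.univ.filter fun x : G => (x : G ⧸ T i) = u ∧ (x : G ⧸ T w.1) = w.2 := by
        intro x hx
        have hxu : (x : G ⧸ T i) = u := (Finset.mem_filter.mp hx).2
        obtain ⟨j, hj, hjc⟩ : ∃ j, j ≠ i ∧ c (Sum.inl (Sum.inr ⟨j, (x : G ⧸ T j)⟩)) ≠ 0 := by
          by_contra! hcon
          have h3 := h1 x
          rw [Finset.sum_eq_single i (fun j _ hj => hcon j hj) (by simp), hxu] at h3
          exact hwc h3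
        refine Finset.mem_biUnion.mpr ⟨⟨j, (x : G ⧸ T j)⟩, ?_, ?_⟩
        · simp [hS, hj, hjc]
        · simp [hxu]
      have h3 := (Finset.card_le_card hcov).trans (Finset.card_biUnion_le_card_mul _ _ (p ^ b)
        fun w hw' => hM.card_inter_le (Finset.mem_filter.mp hw').2.symm u w.2)
      rw [hFc, pow_add] at h3
      have h4 := Nat.le_of_mul_le_mul_right h3 (pow_pos hp.pos _)
      have h5 : (S.filter fun w => w.1 ≠ i).card < S.card :=
        Finset.card_lt_card (Finset.filter_ssubset.mpr ⟨⟨i, u⟩, hw, by simp⟩)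
      omega
    · rw [Finset.not_nonempty_iff_eq_empty] at hne
      have hk : ∀ w, c (Sum.inl (Sum.inr w)) = 0 := fun w => by
        by_contra h
        have : w ∈ S := by simp [hS, h]
        simp [hne] at this
      have hι : Nonempty ι := by
        rw [← Finite.card_pos_iff, hM.card_ι]; omega
      refine absurd (funext fun P => ?_) h0
      rcases P with (y | w) | u
      · exact hf y
      · exact hk w
      · simpa [hk] using h2 hι.some 0
  · -- the support covers `G`
    set deg : G → ℕ := fun x => (S.filter fun w => (⟨w.1, (x : G ⧸ T w.1)⟩ : Σ i, G ⧸ T i) = w).card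
      with hdeg
    have hpos : ∀ x, 1 ≤ deg x := by
      intro x
      obtain ⟨j, _, hj⟩ := Finset.exists_ne_zero_of_sum_ne_zero ((h1 x).trans_ne hσ)
      exact Finset.card_pos.mpr ⟨⟨j, x⟩, by simp [hS, hj]⟩
    have hdc : ∑ x, deg x = S.card * p ^ (a + b) := by
      have := Finset.sum_card_bipartiteAbove_eq_sum_card_bipartiteBelow
        (s := (Finset.univ : Finset G)) (t := S)
        (fun (x : G) (w : Σ i, G ⧸ T i) => (⟨w.1, (x : G ⧸ T w.1)⟩ : Σ i, G ⧸ T i) = w)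
      simp only [Finset.bipartiteAbove, Finset.bipartiteBelow] at this
      rw [hdeg, this, Finset.sum_congr rfl fun w _ => hM.card_fiber w, Finset.sum_const,
        smul_eq_mul]
    have hG : ∑ _x : G, 1 = p ^ a * p ^ (a + b) := by
      rw [Finset.sum_const, Finset.card_univ, ← Nat.card_eq_fintype_card, hM.card_G, smul_eq_mul,
        mul_one, ← pow_add]; congr 1; ring
    by_cases hz : c (Sum.inr ()) = 0
    · -- every line through `∞` meets the support, so some affine point is covered twice
      simp only [hz, add_zero] at h2
      have hex : ∀ i, ∃ u : G ⧸ T i, c (Sum.inl (Sum.inr ⟨i, u⟩)) ≠ 0 := fun i => by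
        obtain ⟨u, _, hu⟩ := Finset.exists_ne_zero_of_sum_ne_zero ((h2 i 0).trans_ne hσ)
        exact ⟨u, hu⟩
      have hι : 1 < Fintype.card ι := by
        rw [← Nat.card_eq_fintype_card, hM.card_ι]
        have := pow_pos hp.pos b
        omega
      obtain ⟨i, j, hij⟩ := Fintype.exists_pair_of_one_lt_card hι
      obtain ⟨u, hu⟩ := hex i
      obtain ⟨v, hv⟩ := hex j
      obtain ⟨x, hxu, hxv⟩ : ∃ x : G, (x : G ⧸ T i) = u ∧ (x : G ⧸ T j) = v := by
        obtain ⟨y, rfl⟩ := QuotientAddGroup.mk_surjective u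
        obtain ⟨z, rfl⟩ := QuotientAddGroup.mk_surjective v
        obtain ⟨e, he, _⟩ := hM.exists_unique_decomp hij.symm (z - y)
        refine ⟨z + e, ?_, ?_⟩
        · rw [QuotientAddGroup.eq_iff_sub_mem]
          convert he using 1; abel
        · rw [QuotientAddGroup.eq_iff_sub_mem]
          simpa using hM.le j e.2
      have h2x : 1 < deg x := by
        refine Finset.one_lt_card.mpr ⟨⟨i, u⟩, ?_, ⟨j, v⟩, ?_, fun h => hij (congrArg Sigma.fst h)⟩
        · simp [hS, hu, hxu]
        · simp [hS, hv, hxv]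
      have h3 : ∑ _x : G, 1 < ∑ x, deg x :=
        Finset.sum_lt_sum (fun x _ => hpos x) ⟨x, Finset.mem_univ _, h2x⟩
      rw [hG, hdc] at h3
      have := Nat.lt_of_mul_lt_mul_right h3
      omega
    · have h3 : ∑ _x : G, 1 ≤ ∑ x, deg x := Finset.sum_le_sum fun x _ => hpos x
      rw [hG, hdc] at h3
      have := Nat.le_of_mul_le_mul_right h3 (pow_pos hp.pos _)
      rw [if_pos hz]
      omega

variable [Module (ZMod p) G]

/-- A nonzero affine part has at least `p ^ a` nonzeros by the degree bound. If the codeword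
vanishes on all cosets, the degree of its affine part is smaller, and the bound is strict. -/
theorem weight_ge {c : MPt T → ZMod p} (hc : c ∈ modelCode p E T) (h0 : c ≠ 0) :
    p ^ a + 1 ≤ Nat.card {P // c P ≠ 0} := by
  have hp : p.Prime := Fact.out
  by_cases hf : ∀ y, c (Sum.inl (Sum.inl y)) = 0
  · exact hM.weight_of_affine_zero hc h0 hf
  have hf0 : (fun y => c (Sum.inl (Sum.inl y))) ≠ 0 := fun h => hf fun y => congrFun h y
  have hfin : Module.Finite (ZMod p) G := Module.Finite.of_finite
  have hr : Module.finrank (ZMod p) G = 2 * a + b := by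
    have h1 := Module.natCard_eq_pow_finrank (K := ZMod p) (V := G)
    rw [hM.card_G, Nat.card_zmod] at h1
    exact (Nat.pow_right_injective hp.two_le h1).symm
  obtain ⟨hd1, hd2⟩ := hM.degree_relations hc
  rw [card_support_eq]
  set A := (Finset.univ.filter fun y => c (Sum.inl (Sum.inl y)) ≠ 0).card with hA
  have hp1 : p - 1 ≠ 0 := by have := hp.two_le; omega
  have hexp : (2 * a + b) * (p - 1) = a * (p - 1) + (p - 1) * (a + b) := by ring
  by_cases hk : ∀ w, c (Sum.inl (Sum.inr w)) = 0
  · -- the degree drops, which makes the bound strict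
    simp only [hk, Finset.sum_const_zero, zero_smul, sub_zero] at hd2
    have h := affFun_weight _ G hr _ _ hd2 hf0
    have hpos : 1 ≤ (p - 1) * (a + b) := Nat.mul_pos (by omega) (by have := hM.one_le_a; omega)
    have hlt : (p ^ a) ^ (p - 1) < A ^ (p - 1) := by
      refine Nat.lt_of_mul_lt_mul_right (a := p ^ ((p - 1) * (a + b) - 1)) (lt_of_lt_of_le ?_ h)
      rw [← pow_mul, ← pow_add]
      exact Nat.pow_lt_pow_right hp.one_lt (by omega)
    have := lt_of_pow_lt_pow_left₀ _ (Nat.zero_le _) hlt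
    omega
  · push Not at hk
    obtain ⟨w, hw⟩ := hk
    have h := affFun_weight _ G hr _ _ hd1 hf0
    rw [hexp, pow_add] at h
    have h1 := Nat.le_of_mul_le_mul_right h (pow_pos hp.pos _)
    rw [pow_mul] at h1
    have h2 := (Nat.pow_le_pow_iff_left hp1).mp h1
    have h3 : 0 < (Finset.univ.filter fun w => c (Sum.inl (Sum.inr w)) ≠ 0).card :=
      Finset.card_pos.mpr ⟨w, by simpa using hw⟩
    omega

end EggModel
end Model3

/-! ### Subspaces meeting a hyperplane -/

section Cone
variable {K V : Type*} [Field K] [AddCommGroup V] [Module K V] {H : Submodule K V} {v₀ : V}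

/-- The subspace spanned by `A` and the vector `v₀ + x`. For a fixed `v₀` off the hyperplane `H`,
the points off `H` are spanned by the vectors `v₀ + x` with `x ∈ H`. -/
def cone (v₀ : V) (A : Submodule K V) (x : V) : Submodule K V := A ⊔ K ∙ (v₀ + x)

lemma self_mem_cone (A : Submodule K V) (x : V) : v₀ + x ∈ cone v₀ A x :=
  Submodule.mem_sup_right (Submodule.mem_span_singleton_self _)

lemma le_cone (A : Submodule K V) (x : V) : A ≤ cone v₀ A x := le_sup_left

lemma coeff_eq_zero (hv : v₀ ∉ H) {h : V} (hh : h ∈ H) {r : K} (hr : r • v₀ + h ∈ H) : r = 0 := by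
  by_contra h0
  have h1 : r • v₀ ∈ H := by simpa using sub_mem hr hh
  exact hv ((H.smul_mem_iff h0).mp h1)

lemma add_mem_cone (hv : v₀ ∉ H) {A : Submodule K V} (hA : A ≤ H) {x y : V} (hx : x ∈ H)
    (hy : y ∈ H) : v₀ + y ∈ cone v₀ A x ↔ y - x ∈ A := by
  constructor
  · intro h
    obtain ⟨z, hz, w, hw, hzw⟩ := Submodule.mem_sup.mp h
    obtain ⟨r, rfl⟩ := Submodule.mem_span_singleton.mp hw
    have h1 : (r - 1) • v₀ + (z + r • x) = y := by
      rw [sub_smul, one_smul]; rw [smul_add] at hzw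
      rw [show r • v₀ - v₀ + (z + r • x) = z + (r • v₀ + r • x) - v₀ by abel, hzw]; abel
    have h2 := coeff_eq_zero hv (add_mem (hA hz) (H.smul_mem r hx)) (h1 ▸ hy)
    rw [sub_eq_zero] at h2
    subst h2
    rw [← h1]; simpa using hz
  · intro h
    have := add_mem (le_cone (v₀ := v₀) A x h) (self_mem_cone A x)
    convert this using 1; abel

lemma cone_inf (hv : v₀ ∉ H) {A : Submodule K V} (hA : A ≤ H) {x : V} (hx : x ∈ H) :
    cone v₀ A x ⊓ H = A := by
  refine le_antisymm ?_ (le_inf (le_cone A x) hA)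
  rintro u ⟨h, hu⟩
  obtain ⟨z, hz, w, hw, hzw⟩ := Submodule.mem_sup.mp h
  obtain ⟨r, rfl⟩ := Submodule.mem_span_singleton.mp hw
  have h1 : r • v₀ + (z + r • x) = u := by rw [← hzw, smul_add]; abel
  have h2 := coeff_eq_zero hv (add_mem (hA hz) (H.smul_mem r hx)) (h1 ▸ hu)
  subst h2
  rw [← h1]; simpa using hz

variable [FiniteDimensional K V]

lemma finrank_cone (hv : v₀ ∉ H) {A : Submodule K V} (hA : A ≤ H) {x : V} (hx : x ∈ H) :
    Module.finrank K (cone v₀ A x) = Module.finrank K A + 1 := by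
  have hn : v₀ + x ∉ H := fun h => hv (by simpa using sub_mem h hx)
  have h0 : v₀ + x ≠ 0 := fun h => hn (h ▸ zero_mem _)
  have h1 := Submodule.finrank_sup_add_finrank_inf_eq A (K ∙ (v₀ + x))
  have h2 : A ⊓ K ∙ (v₀ + x) = ⊥ := by
    rw [← disjoint_iff, Submodule.disjoint_span_singleton' h0]
    exact fun h => hn (hA h)
  rw [h2, finrank_bot, finrank_span_singleton h0, add_zero] at h1
  exact h1

/-- A subspace whose dimension exceeds that of `W ⊓ H` by one is a cone over `W ⊓ H`. -/
lemma exists_eq_cone (hv : v₀ ∉ H) (hH : Module.finrank K H + 1 = Module.finrank K V)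
    {A W : Submodule K V} (hW : Module.finrank K W = Module.finrank K A + 1) (hWH : W ⊓ H = A) :
    ∃ x ∈ H, W = cone v₀ A x := by
  have hA : A ≤ H := hWH ▸ inf_le_right
  have hAW : A ≤ W := hWH ▸ inf_le_left
  obtain ⟨w, hw, hwH⟩ : ∃ w ∈ W, w ∉ H := by
    by_contra! h
    have : W ⊓ H = W := inf_eq_left.mpr h
    rw [← hWH, this] at hW
    omega
  have htop : cone v₀ H 0 = ⊤ := by
    apply Submodule.eq_top_of_finrank_eq
    rw [finrank_cone hv le_rfl (zero_mem _), hH]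
  obtain ⟨z, hz, u, hu, hzu⟩ := Submodule.mem_sup.mp (htop ▸ Submodule.mem_top : w ∈ cone v₀ H 0)
  obtain ⟨r, rfl⟩ := Submodule.mem_span_singleton.mp hu
  rw [add_zero] at hzu
  have hr : r ≠ 0 := by
    rintro rfl
    exact hwH (by rw [← hzu]; simpa using hz)
  refine ⟨r⁻¹ • z, H.smul_mem _ hz, ?_⟩
  symm
  apply Submodule.eq_of_le_of_finrank_eq
  · refine sup_le hAW ((Submodule.span_singleton_le_iff_mem _ _).mpr ?_)
    convert W.smul_mem r⁻¹ hw using 1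
    rw [← hzu, smul_add, smul_smul, inv_mul_cancel₀ hr, one_smul, add_comm]
  · rw [finrank_cone hv hA (H.smul_mem _ hz), hW]

lemma cone_eq_cone_iff (hv : v₀ ∉ H) {A : Submodule K V} (hA : A ≤ H) {x y : V} (hx : x ∈ H)
    (hy : y ∈ H) : cone v₀ A x = cone v₀ A y ↔ x - y ∈ A := by
  constructor
  · intro h
    rw [← add_mem_cone hv hA hy hx, ← h]
    exact self_mem_cone A x
  · intro h
    apply Submodule.eq_of_le_of_finrank_eq
    · exact sup_le (le_cone A y) ((Submodule.span_singleton_le_iff_mem _ _).mpr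
        ((add_mem_cone hv hA hy hx).mpr h))
    · rw [finrank_cone hv hA hx, finrank_cone hv hA hy]

/-- A point off the hyperplane `H` is spanned by `v₀ + x` for some `x ∈ H`. -/
lemma exists_affine_point (hv : v₀ ∉ H) (hH : Module.finrank K H + 1 = Module.finrank K V)
    {W : Submodule K V} (hW : Module.finrank K W = 1) (hWH : ¬ W ≤ H) :
    ∃ x ∈ H, W = K ∙ (v₀ + x) := by
  have h1 : W ⊓ H = ⊥ := by
    rw [← Submodule.finrank_eq_zero (R := K)]
    have h2 : Module.finrank K ↥(W ⊓ H) < Module.finrank K W :=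
      Submodule.finrank_lt_finrank_of_lt (inf_lt_left.mpr hWH)
    omega
  obtain ⟨x, hx, h⟩ := exists_eq_cone hv hH (A := ⊥) (W := W) (by simp [hW]) h1
  exact ⟨x, hx, by rw [h, cone, bot_sup_eq]⟩

end Cone

/-! ### Identification of `T(E)` with the coset model -/

section Transfer
variable {K V : Type*} [Field K] [AddCommGroup V] [Module K V]

/-- A subspace of `H`, as a subgroup of `H`. -/
def trace (H A : Submodule K V) : AddSubgroup H := (A.comap H.subtype).toAddSubgroup

lemma mem_trace {H A : Submodule K V} {x : H} : x ∈ trace H A ↔ (x : V) ∈ A := Iff.rfl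

lemma card_trace [Finite V] {q d : ℕ} (hK : Nat.card K = q) {H A : Submodule K V} (hA : A ≤ H)
    (hd : Module.finrank K A = d) : Nat.card (trace H A) = q ^ d := by
  have e : trace H A ≃ A :=
    { toFun := fun x => ⟨x.1, x.2⟩
      invFun := fun x => ⟨⟨x.1, hA x.2⟩, x.2⟩
      left_inv := fun _ => rfl
      right_inv := fun _ => rfl }
  rw [Nat.card_congr e, Module.natCard_eq_pow_finrank (K := K), hK, hd]

/-- The points of `T(E)`. -/
abbrev QPt (n m : ℕ) (H : Submodule K V) (Egg : Set (Submodule K V))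
    (TS : Submodule K V → Submodule K V) : Type _ :=
  ({x : Projectivization K V // ¬ x.submodule ≤ H} ⊕
    {W : Submodule K V // Module.finrank K W = n + m + 1 ∧ ∃ e ∈ Egg, W ⊓ H = TS e}) ⊕ Unit

variable [FiniteDimensional K V] {n m : ℕ} {H : Submodule K V} {Egg : Set (Submodule K V)}
  {TS : Submodule K V → Submodule K V} {v₀ : V}

lemma add_notMem (hv : v₀ ∉ H) (y : H) : v₀ + (y : V) ∉ H := fun h =>
  hv (by simpa using sub_mem h y.2)

lemma vertex_ne_zero (hv : v₀ ∉ H) (y : H) : v₀ + (y : V) ≠ 0 := fun h =>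
  add_notMem hv y (h ▸ zero_mem _)

/-- The point map from the model: `y ∈ H` goes to the affine point `v₀ + y`, and the coset of
`u` modulo `TS i` to the cone over `TS i` with vertex `v₀ + u`. -/
noncomputable def ptMap (hv : v₀ ∉ H)
    (hT : ∀ i ∈ Egg, TS i ≤ H ∧ Module.finrank K (TS i) = n + m) :
    MPt (fun i : Egg => trace H (TS i)) → QPt n m H Egg TS
  | Sum.inl (Sum.inl y) => Sum.inl (Sum.inl ⟨Projectivization.mk K (v₀ + (y : V))
      (vertex_ne_zero hv y), by
        rw [Projectivization.submodule_mk, Submodule.span_singleton_le_iff_mem]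
        exact add_notMem hv y⟩)
  | Sum.inl (Sum.inr w) => Sum.inl (Sum.inr ⟨cone v₀ (TS w.1) (w.2.out : H), by
      rw [finrank_cone hv (hT _ w.1.2).1 (Subtype.mem _), (hT _ w.1.2).2],
      w.1, w.1.2, cone_inf hv (hT _ w.1.2).1 (Subtype.mem _)⟩)
  | Sum.inr u => Sum.inr u

lemma ptMap_bijective (hv : v₀ ∉ H) (hH : Module.finrank K H + 1 = Module.finrank K V)
    (hT : ∀ i ∈ Egg, TS i ≤ H ∧ Module.finrank K (TS i) = n + m)
    (hinj : ∀ i ∈ Egg, ∀ j ∈ Egg, TS i = TS j → i = j) :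
    Function.Bijective (ptMap (n := n) (m := m) hv hT) := by
  constructor
  · rintro ((y | ⟨i, u⟩) | u) ((y' | ⟨j, u'⟩) | u') h
    · simp only [ptMap, Sum.inl.injEq, Subtype.mk.injEq] at h
      have h1 := congrArg Projectivization.submodule h
      rw [Projectivization.submodule_mk, Projectivization.submodule_mk] at h1
      have h2 : cone v₀ (⊥ : Submodule K V) y = cone v₀ ⊥ y' := by
        rw [cone, cone, h1]
      rw [cone_eq_cone_iff hv bot_le y.2 y'.2, Submodule.mem_bot, sub_eq_zero] at h2
      rw [Subtype.ext h2]
    · simp [ptMap] at h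
    · simp [ptMap] at h
    · simp [ptMap] at h
    · simp only [ptMap, Sum.inl.injEq, Sum.inr.injEq, Subtype.mk.injEq] at h
      have h1 := congrArg (· ⊓ H) h
      rw [cone_inf hv (hT _ i.2).1 (Subtype.mem _), cone_inf hv (hT _ j.2).1 (Subtype.mem _)] at h1
      have hij : i = j := Subtype.ext (hinj _ i.2 _ j.2 h1)
      subst hij
      rw [cone_eq_cone_iff hv (hT _ i.2).1 (Subtype.mem _) (Subtype.mem _)] at h
      have h2 : (u.out - u'.out : H) ∈ trace H (TS i) := h
      rw [← QuotientAddGroup.eq_iff_sub_mem, QuotientAddGroup.out_eq', QuotientAddGroup.out_eq']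
        at h2
      rw [h2]
    · simp [ptMap] at h
    · simp [ptMap] at h
    · simp [ptMap] at h
    · rfl
  · rintro ((⟨x, hx⟩ | ⟨W, hW, e, he, hWe⟩) | u)
    · obtain ⟨y, hy, hxy⟩ := exists_affine_point hv hH x.finrank_submodule hx
      refine ⟨Sum.inl (Sum.inl ⟨y, hy⟩), ?_⟩
      simp only [ptMap, Sum.inl.injEq, Subtype.mk.injEq]
      apply Projectivization.submodule_injective
      rw [Projectivization.submodule_mk, hxy]
    · obtain ⟨y, hy, hxy⟩ := exists_eq_cone hv hH (A := TS e) (by rw [hW, (hT e he).2]) hWe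
      refine ⟨Sum.inl (Sum.inr ⟨⟨e, he⟩, ((⟨y, hy⟩ : H) : H ⧸ trace H (TS e))⟩), ?_⟩
      simp only [ptMap, Sum.inl.injEq, Sum.inr.injEq, Subtype.mk.injEq]
      rw [hxy, cone_eq_cone_iff hv (hT e he).1 (Subtype.mem _) hy]
      have : (((⟨y, hy⟩ : H) : H ⧸ trace H (TS e)).out - ⟨y, hy⟩ : H) ∈ trace H (TS e) := by
        rw [← QuotientAddGroup.eq_iff_sub_mem, QuotientAddGroup.out_eq']
      exact this
    · exact ⟨Sum.inr u, rfl⟩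

/-- A cone over an egg element `i` lies in a cone over `TS j` iff `i = j` and the vertices agree
modulo `TS j`. -/
lemma cone_le_cone_iff (hv : v₀ ∉ H) (hT : ∀ i ∈ Egg, TS i ≤ H ∧ Module.finrank K (TS i) = n + m)
    (hle : ∀ i ∈ Egg, ∀ j ∈ Egg, i ≤ TS j ↔ i = j) {i : Submodule K V} (hi : i ∈ Egg)
    (x : H) (w : Σ j : Egg, H ⧸ trace H (TS j)) :
    cone v₀ i x ≤ cone v₀ (TS w.1) (w.2.out : H) ↔ w = ⟨⟨i, hi⟩, (x : H ⧸ trace H (TS i))⟩ := by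
  obtain ⟨j, u⟩ := w
  have hu : v₀ + (x : V) ∈ cone v₀ (TS j) (u.out : H) ↔ (x : H ⧸ trace H (TS j)) = u := by
    rw [add_mem_cone hv (hT _ j.2).1 (Subtype.mem _) x.2]
    have : ((x : V) - (u.out : H) ∈ TS j) ↔ (x - u.out : H) ∈ trace H (TS j) := Iff.rfl
    rw [this, ← QuotientAddGroup.eq_iff_sub_mem, QuotientAddGroup.out_eq']
  constructor
  · intro h
    have h1 : i ≤ TS j := by
      have hiH : i ≤ H := ((hle i hi i hi).mpr rfl).trans (hT i hi).1
      rw [← cone_inf hv (hT _ j.2).1 (Subtype.mem u.out)]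
      exact le_inf ((le_cone _ _).trans h) hiH
    obtain rfl : j = ⟨i, hi⟩ := Subtype.ext ((hle i hi j j.2).mp h1).symm
    rw [← hu.mp (h (self_mem_cone _ _))]
  · intro h
    obtain rfl : j = ⟨i, hi⟩ := congrArg Sigma.fst h
    refine sup_le (((hle i hi i hi).mpr rfl).trans (le_cone _ _))
      ((Submodule.span_singleton_le_iff_mem _ _).mpr (hu.mpr ?_))
    simpa using h.symm

end Transfer

/-- The minimum distance of the `p`-ary code of points and lines of the translation
generalised quadrangle `T(E)` of order `(q^n, q^m)`, `q = p^h` with `p` prime,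
equals `s + 1 = q^n + 1`. -/
theorem TE_code_minimum_distance
    (p h n m : ℕ) (hp : p.Prime) (hh : 1 ≤ h) (hn : 1 ≤ n) (hm : 1 ≤ m)
    (K : Type*) [Field K] [Fintype K] (hK : Fintype.card K = p ^ h)
    (H : Submodule K (Fin (2 * n + m + 1) → K))
    (hH : Module.finrank K H = 2 * n + m)
    (Egg : Set (Submodule K (Fin (2 * n + m + 1) → K)))
    (hcard : Nat.card Egg = p ^ (h * m) + 1)
    (hdim : ∀ E ∈ Egg, E ≤ H ∧ Module.finrank K E = n)
    (hspan3 : ∀ E ∈ Egg, ∀ F ∈ Egg, ∀ G ∈ Egg, E ≠ F → E ≠ G → F ≠ G →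
      Module.finrank K ↥(E ⊔ F ⊔ G) = 3 * n)
    (TS : Submodule K (Fin (2 * n + m + 1) → K) → Submodule K (Fin (2 * n + m + 1) → K))
    (hTS : ∀ E ∈ Egg, E ≤ TS E ∧ TS E ≤ H ∧ Module.finrank K (TS E) = n + m ∧
      ∀ F ∈ Egg, F ≠ E → F ⊓ TS E = ⊥) :
    ∀ I : (({x : Projectivization K (Fin (2 * n + m + 1) → K) // ¬ x.submodule ≤ H} ⊕ {W : Submodule K (Fin (2 * n + m + 1) → K) // Module.finrank K W = n + m + 1 ∧ ∃ e ∈ Egg, W ⊓ H = TS e}) ⊕ Unit) → ({W : Submodule K (Fin (2 * n + m + 1) → K) // Module.finrank K W = n + 1 ∧ W ⊓ H ∈ Egg} ⊕ {e : Submodule K (Fin (2 * n + m + 1) → K) // e ∈ Egg}) → Prop,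
      I = (fun P l =>
        match P, l with
        | Sum.inl (Sum.inl x), Sum.inl W => x.1.submodule ≤ W.1
        | Sum.inl (Sum.inl _), Sum.inr _ => False
        | Sum.inl (Sum.inr W), Sum.inl U => U.1 ≤ W.1
        | Sum.inl (Sum.inr W), Sum.inr e => e.1 ≤ W.1
        | Sum.inr _, Sum.inl _ => False
        | Sum.inr _, Sum.inr _ => True) →
      (∀ c ∈ Submodule.span (ZMod p)
          {v : (({x : Projectivization K (Fin (2 * n + m + 1) → K) // ¬ x.submodule ≤ H} ⊕ {W : Submodule K (Fin (2 * n + m + 1) → K) // Module.finrank K W = n + m + 1 ∧ ∃ e ∈ Egg, W ⊓ H = TS e}) ⊕ Unit) → ZMod p | ∃ l : ({W : Submodule K (Fin (2 * n + m + 1) → K) // Module.finrank K W = n + 1 ∧ W ⊓ H ∈ Egg} ⊕ {e : Submodule K (Fin (2 * n + m + 1) → K) // e ∈ Egg}), v = fun P => if I P l then 1 else 0},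
        c ≠ 0 → p ^ (h * n) + 1 ≤ Nat.card {P : (({x : Projectivization K (Fin (2 * n + m + 1) → K) // ¬ x.submodule ≤ H} ⊕ {W : Submodule K (Fin (2 * n + m + 1) → K) // Module.finrank K W = n + m + 1 ∧ ∃ e ∈ Egg, W ⊓ H = TS e}) ⊕ Unit) // c P ≠ 0}) ∧
      (∃ c ∈ Submodule.span (ZMod p)
          {v : (({x : Projectivization K (Fin (2 * n + m + 1) → K) // ¬ x.submodule ≤ H} ⊕ {W : Submodule K (Fin (2 * n + m + 1) → K) // Module.finrank K W = n + m + 1 ∧ ∃ e ∈ Egg, W ⊓ H = TS e}) ⊕ Unit) → ZMod p | ∃ l : ({W : Submodule K (Fin (2 * n + m + 1) → K) // Module.finrank K W = n + 1 ∧ W ⊓ H ∈ Egg} ⊕ {e : Submodule K (Fin (2 * n + m + 1) → K) // e ∈ Egg}), v = fun P => if I P l then 1 else 0},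
        c ≠ 0 ∧ Nat.card {P : (({x : Projectivization K (Fin (2 * n + m + 1) → K) // ¬ x.submodule ≤ H} ⊕ {W : Submodule K (Fin (2 * n + m + 1) → K) // Module.finrank K W = n + m + 1 ∧ ∃ e ∈ Egg, W ⊓ H = TS e}) ⊕ Unit) // c P ≠ 0} = p ^ (h * n) + 1) := by
  have hpF : Fact p.Prime := ⟨hp⟩
  have hKc : Nat.card K = p ^ h := by rw [Nat.card_eq_fintype_card, hK]
  have hchar : CharP K p := charP_of_card_eq_prime_pow hK
  let _ : Module (ZMod p) H := AddCommGroup.zmodModule (n := p) fun x => by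
    rw [← Nat.cast_smul_eq_nsmul K, CharP.cast_eq_zero, zero_smul]
  have hfr : Module.finrank K H + 1 = Module.finrank K (Fin (2 * n + m + 1) → K) := by
    rw [hH, Module.finrank_fin_fun]
  obtain ⟨v₀, hv⟩ : ∃ v, v ∉ H := by
    by_contra! hall
    rw [Submodule.eq_top_iff'.mpr hall, finrank_top] at hfr
    omega
  have hT : ∀ i ∈ Egg, TS i ≤ H ∧ Module.finrank K (TS i) = n + m := fun i hi =>
    ⟨(hTS i hi).2.1, (hTS i hi).2.2.1⟩
  have hle : ∀ i ∈ Egg, ∀ j ∈ Egg, i ≤ TS j ↔ i = j := by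
    refine fun i hi j hj => ⟨fun hij => ?_, fun hij => hij ▸ (hTS i hi).1⟩
    by_contra hne
    have h1 := (hTS j hj).2.2.2 i hi hne
    rw [inf_eq_left.mpr hij] at h1
    have h2 := (hdim i hi).2
    rw [h1, finrank_bot] at h2
    omega
  have hinj : ∀ i ∈ Egg, ∀ j ∈ Egg, TS i = TS j → i = j := fun i hi j hj hij =>
    (hle i hi j hj).mp (hij ▸ (hTS i hi).1)
  have hfinH : Fintype H := Fintype.ofFinite _
  have hfinE : Fintype Egg := Fintype.ofFinite _
  have hM : EggModel p (h * n) (h * m) (fun i : Egg => trace H i.1)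
      (fun i : Egg => trace H (TS i)) :=
    { one_le_a := Nat.mul_pos hh hn
      one_le_b := Nat.mul_pos hh hm
      card_G := by
        rw [Module.natCard_eq_pow_finrank (K := K), hKc, hH, ← pow_mul]; congr 1; ring
      card_ι := hcard
      card_E := fun i => by rw [card_trace hKc (hdim i i.2).1 (hdim i i.2).2, ← pow_mul]
      card_T := fun i => by
        rw [card_trace hKc (hT i i.2).1 (hT i i.2).2, ← pow_mul, mul_add]
      le := fun i x hx => (hTS i i.2).1 hx
      disj := fun i j hji x hx hx' => by
        have h1 := (hTS i i.2).2.2.2 j j.2 (fun he => hji (Subtype.ext he))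
        have h2 : (x : Fin (2 * n + m + 1) → K) ∈ (j : Submodule K _) ⊓ TS i := ⟨hx, hx'⟩
        rw [h1, Submodule.mem_bot] at h2
        exact Subtype.ext h2
      triple := fun i j k hij hik hjk x hx y hy z hz hxyz => by
        have h1 := hspan3 i i.2 j j.2 k k.2 (fun he => hij (Subtype.ext he))
          (fun he => hik (Subtype.ext he)) (fun he => hjk (Subtype.ext he))
        have h2 := Submodule.finrank_sup_add_finrank_inf_eq (i.1 ⊔ j.1) k.1
        have h3 := Submodule.finrank_add_le_finrank_add_finrank i.1 j.1
        rw [h1, (hdim k k.2).2] at h2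
        rw [(hdim i i.2).2, (hdim j j.2).2] at h3
        have h4 : (i.1 ⊔ j.1) ⊓ k.1 = ⊥ := by
          rw [← Submodule.finrank_eq_zero (R := K)]; omega
        have h5 : (z : Fin (2 * n + m + 1) → K) ∈ (i.1 ⊔ j.1) ⊓ k.1 := by
          refine ⟨?_, hz⟩
          have h6 : z = -(x + y) := (neg_eq_of_add_eq_zero_right hxyz).symm
          rw [h6]
          exact neg_mem (add_mem (Submodule.mem_sup_left hx) (Submodule.mem_sup_right hy))
        rw [h4, Submodule.mem_bot] at h5
        exact Subtype.ext h5 }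
  rintro I rfl
  have hbij := ptMap_bijective (n := n) (m := m) hv hfr hT hinj
  set φ := ptMap (n := n) (m := m) hv hT with hφ
  have hweight : ∀ c : QPt n m H Egg TS → ZMod p,
      Nat.card {P // c P ≠ 0} = Nat.card {P // (c ∘ φ) P ≠ 0} := fun c =>
    Nat.card_congr ((Equiv.ofBijective φ hbij).subtypeEquiv fun _ => Iff.rfl).symm
  -- the incidence vector of an egg element, read in the model
  have hB : ∀ (e : Egg) (P : MPt fun i : Egg => trace H (TS i)),
      (if (match φ P, (Sum.inr e : {W : Submodule K (Fin (2 * n + m + 1) → K) //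
            Module.finrank K W = n + 1 ∧ W ⊓ H ∈ Egg} ⊕ Egg) with
        | Sum.inl (Sum.inl x), Sum.inl W => x.1.submodule ≤ W.1
        | Sum.inl (Sum.inl _), Sum.inr _ => False
        | Sum.inl (Sum.inr W), Sum.inl U => U.1 ≤ W.1
        | Sum.inl (Sum.inr W), Sum.inr e => e.1 ≤ W.1
        | Sum.inr _, Sum.inl _ => False
        | Sum.inr _, Sum.inr _ => True) then (1 : ZMod p) else 0)
        = lineB p (fun i : Egg => trace H (TS i)) e P := by
    rintro e ((y | w) | u)
    · simp [hφ, ptMap, lineB]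
    · simp only [hφ, ptMap, lineB]
      congr 1
      refine propext ⟨fun hew => ?_, ?_⟩
      · have h1 := le_inf hew (hdim e e.2).1
        rw [cone_inf hv (hT _ w.1.2).1 (Subtype.mem _), hle e e.2 w.1 w.1.2] at h1
        exact Subtype.ext h1.symm
      · rintro rfl
        exact (hTS _ w.1.2).1.trans (le_cone _ _)
    · simp [hφ, ptMap, lineB]
  refine ⟨fun c hc h0 => ?_, ?_⟩
  · rw [hweight]
    refine hM.weight_ge (c := c ∘ φ) ?_ ?_
    · change c ∈ (modelCode p _ _).comap (LinearMap.funLeft (ZMod p) (ZMod p) φ)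
      refine Submodule.span_le.mpr ?_ hc
      rintro _ ⟨U | e, rfl⟩
      · obtain ⟨U, hU, hUE⟩ := U
        obtain ⟨x, hx, hUx⟩ := exists_eq_cone hv hfr (A := U ⊓ H)
          (by rw [hU, (hdim _ hUE).2]) rfl
        refine Submodule.subset_span (Or.inl ⟨⟨U ⊓ H, hUE⟩, ⟨x, hx⟩, ?_⟩)
        ext P
        rcases P with (y | w) | u
        · simp only [LinearMap.funLeft_apply, hφ, ptMap, lineA, cosetInd]
          congr 1
          rw [Projectivization.submodule_mk, Submodule.span_singleton_le_iff_mem]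
          conv_lhs => rw [hUx]
          rw [add_mem_cone hv inf_le_right hx y.2]
          rfl
        · simp only [LinearMap.funLeft_apply, hφ, ptMap, lineA]
          congr 1
          conv_lhs => rw [hUx]
          exact propext (cone_le_cone_iff hv hT hle hUE ⟨x, hx⟩ w)
        · simp [LinearMap.funLeft_apply, hφ, ptMap, lineA]
      · refine Submodule.subset_span (Or.inr ⟨e, funext fun P => hB e P⟩)
    · intro hz
      refine h0 (funext fun P => ?_)
      obtain ⟨Q, rfl⟩ := hbij.2 P
      exact congrFun hz Q
  · obtain ⟨e⟩ : Nonempty Egg := by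
      rw [← Finite.card_pos_iff, hcard]; omega
    refine ⟨_, Submodule.subset_span ⟨Sum.inr e, rfl⟩, ?_, ?_⟩
    · intro hz
      have := congrFun hz (Sum.inr ())
      simp at this
    · rw [hweight, ← hM.card_lineB e]
      exact Nat.card_congr (Equiv.subtypeEquivRight fun P => by
        rw [← hB e P]; rfl)
end
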